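/- For every real number γ with 0 < γ < 1 there exists a constant C > 0, depending only on n, p, α, γ, C₁ and C₂, with the following property: let 0 < r₁ < r₂ and h ≥ 0 be real numbers and let v be a nonnegative continuous function on the closed annulus {r₁ ≤ |x| ≤ r₂} which is C¹ on the open annulus B_{r₁,r₂} and a solution of div A(x,Dv) + b(x)|Dv|^α ≥ χ_ω(x)·h in B_{r₁,r₂}, where ω = {x ∈ B_{r₁,r₂} : v(x) > 0} and χ_ω is the characteristic function of ω. Suppose that ρ ↦ M(ρ;v) is nondecreasing on [r₁, r₂], that M(r₂;v) > M(r₁;v) ≥ γ·M(r₂;v), and that (M(r₂;v) − M(r₁;v))^{α−p+1}·(r₂ − r₁)^{p−α}·ess sup_{B_{r₁,r₂}} b ≤ C₁/4. Then (M(r₂;v) − M(r₁;v))^{p−1} ≥ C·(r₂ − r₁)^p·h. -/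

import Mathlib

open MeasureTheory Metric Set Filter
open scoped RealInnerProductSpace ENNReal

noncomputable section

abbrev Euc (n : ℕ) := EuclideanSpace ℝ (Fin n)

/-- Weak solution of `div A(x,Dv) + b(x)|Dv|^α ≥ a(x)` on an open set `U`:
for every nonnegative test function `φ ∈ C₀^∞(U)`,
`-∫ A(x,Dv)·Dφ + ∫ b |Dv|^α φ ≥ ∫ a φ`. -/
def IsWeakSol {n : ℕ} (A : Euc n → Euc n → Euc n) (b : Euc n → ℝ) (α : ℝ)
    (a : Euc n → ℝ) (U : Set (Euc n)) (v : Euc n → ℝ) : Prop :=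
  ∀ φ : Euc n → ℝ, ContDiff ℝ (⊤ : ℕ∞) φ → HasCompactSupport φ → tsupport φ ⊆ U →
    (∀ x, 0 ≤ φ x) →
    (∫ x in U, a x * φ x) ≤
      (-(∫ x in U, ⟪A x (gradient v x), gradient φ x⟫)) +
        ∫ x in U, b x * ‖gradient v x‖ ^ α * φ x

/-- Structural conditions on `A`: measurability, coercivity and growth. -/
def StructCond {n : ℕ} (A : Euc n → Euc n → Euc n) (p C₁ C₂ : ℝ) : Prop :=
  Measurable (Function.uncurry A) ∧
    ∀ x ζ : Euc n, C₁ * ‖ζ‖ ^ p ≤ ⟪ζ, A x ζ⟫ ∧ ‖A x ζ‖ ≤ C₂ * ‖ζ‖ ^ (p - 1)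

/-- Locally bounded function on `ℝⁿ`. -/
def LocBdd {n : ℕ} (b : Euc n → ℝ) : Prop :=
  ∀ K : Set (Euc n), IsCompact K → ∃ C, ∀ x ∈ K, b x ≤ C

/-- `M(r; u) = max_{|x| = r} u x`. -/
def sphMax {n : ℕ} (u : Euc n → ℝ) (r : ℝ) : ℝ := sSup (u '' Metric.sphere (0 : Euc n) r)

/-- `g_θ(t) = inf_{s ∈ (t/θ, θ t)} g s`. -/
def ginf (g : ℝ → ℝ) (θ t : ℝ) : ℝ := sInf (g '' Set.Ioo (t / θ) (θ * t))

/-- The open annulus `{x : r₁ < |x| < r₂}`. -/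
def Ann (n : ℕ) (r₁ r₂ : ℝ) : Set (Euc n) := {x : Euc n | r₁ < ‖x‖ ∧ ‖x‖ < r₂}

/-- `q_σ(r) = ess inf_{r/σ < |x| < σ r} q x`. -/
def qinf {n : ℕ} (q : Euc n → ℝ) (σ r : ℝ) : ℝ :=
  essInf q (volume.restrict (Ann n (r / σ) (σ * r)))

/-- `f_σ(r) = q_σ(r) / (1 + r q_σ(r)^{(α-p+1)/α} ess sup_{r/σ<|x|<σr} b^{(p-1)/α})`. -/
def fdef {n : ℕ} (q b : Euc n → ℝ) (p α σ r : ℝ) : ℝ :=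
  qinf q σ r /
    (1 + r * qinf q σ r ^ ((α - p + 1) / α) *
      essSup (fun x => b x ^ ((p - 1) / α)) (volume.restrict (Ann n (r / σ) (σ * r))))

lemma pp_hasDerivAt {q : ℝ} (hq : 1 < q) (s : ℝ) :
    HasDerivAt (fun s : ℝ => (max s 0) ^ q) (q * (max s 0) ^ (q - 1)) s := by
  have hq1 : 0 < q - 1 := by linarith
  rcases lt_trichotomy s 0 with h | h | h
  · have : (fun s : ℝ => (max s 0) ^ q) =ᶠ[nhds s] fun _ => (0:ℝ) := by
      filter_upwards [Iio_mem_nhds h] with x hx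
      rw [max_eq_right (le_of_lt hx), Real.zero_rpow (by linarith)]
    rw [max_eq_right h.le, Real.zero_rpow hq1.ne', mul_zero]
    exact (hasDerivAt_const s (0:ℝ)).congr_of_eventuallyEq this
  · subst h
    rw [max_self, Real.zero_rpow hq1.ne', mul_zero]
    rw [hasDerivAt_iff_isLittleO]
    have h1 : (fun x' : ℝ => (max x' 0) ^ q - (max (0:ℝ) 0) ^ q - (x' - 0) • (0:ℝ))
        = fun x' => (max x' 0) ^ q := by
      funext x; simp [Real.zero_rpow (show q ≠ 0 by linarith)]
    rw [h1]
    rw [Asymptotics.isLittleO_iff]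
    intro c hc
    have ht : Tendsto (fun x : ℝ => (max x 0) ^ (q - 1)) (nhds 0) (nhds 0) := by
      have : Continuous (fun x : ℝ => (max x 0) ^ (q - 1)) :=
        (continuous_id.max continuous_const).rpow_const (fun _ => Or.inr hq1.le)
      have h := this.tendsto 0
      simpa [Real.zero_rpow hq1.ne'] using h
    filter_upwards [ht.eventually (gt_mem_nhds hc)] with x hx
    have hm : 0 ≤ max x 0 := le_max_right _ _
    rcases eq_or_lt_of_le hm with h0 | h0
    · rw [← h0, Real.zero_rpow (by linarith)]
      simp; positivity
    · have : (max x 0) ^ q = (max x 0) ^ (q - 1) * max x 0 := by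
        rw [← Real.rpow_add_one h0.ne']; congr 1; ring
      rw [this, norm_mul, Real.norm_of_nonneg (Real.rpow_nonneg hm _), Real.norm_of_nonneg hm]
      apply mul_le_mul hx.le _ hm hc.le
      rw [sub_zero, Real.norm_eq_abs]
      exact max_le (le_abs_self x) (abs_nonneg x)
  · have : (fun s : ℝ => (max s 0) ^ q) =ᶠ[nhds s] fun s => s ^ q := by
      filter_upwards [Ioi_mem_nhds h] with x hx
      rw [max_eq_left (le_of_lt hx)]
    rw [max_eq_left h.le]
    exact (Real.hasDerivAt_rpow_const (Or.inl h.ne')).congr_of_eventuallyEq this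

lemma pp_contDiff {q : ℝ} (hq : 1 < q) : ContDiff ℝ 1 (fun s : ℝ => (max s 0) ^ q) := by
  rw [contDiff_one_iff_deriv]
  refine ⟨fun s => (pp_hasDerivAt hq s).differentiableAt, ?_⟩
  have : deriv (fun s : ℝ => (max s 0) ^ q) = fun s => q * (max s 0) ^ (q - 1) := by
    funext s; exact (pp_hasDerivAt hq s).deriv
  rw [this]
  exact continuous_const.mul ((continuous_id.max continuous_const).rpow_const
    (fun _ => Or.inr (by linarith)))

lemma smooth_approx {n : ℕ} {U : Set (Euc n)} (hU : IsOpen U) {φ : Euc n → ℝ}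
    (hφ : ContDiff ℝ 1 φ) (hc : HasCompactSupport φ) (hs : tsupport φ ⊆ U)
    (h0 : ∀ x, 0 ≤ φ x) :
    ∃ K : Set (Euc n), IsCompact K ∧ K ⊆ U ∧ tsupport φ ⊆ K ∧ ∀ ε > 0, ∃ ψ : Euc n → ℝ,
      ContDiff ℝ (⊤ : ℕ∞) ψ ∧ HasCompactSupport ψ ∧ tsupport ψ ⊆ K ∧ (∀ x, 0 ≤ ψ x) ∧
      (∀ x, |ψ x - φ x| ≤ ε) ∧ ∀ x, ‖gradient ψ x - gradient φ x‖ ≤ ε := by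
  obtain ⟨r, hr, hrU⟩ := hc.isCompact.exists_cthickening_subset_open hU hs
  refine ⟨cthickening r (tsupport φ), hc.isCompact.cthickening, hrU,
    self_subset_cthickening _, fun ε hε => ?_⟩
  have hdc : Continuous (fderiv ℝ φ) := hφ.continuous_fderiv (by norm_num)
  have hu1 : UniformContinuous φ := hc.uniformContinuous_of_continuous hφ.continuous
  have hu2 : UniformContinuous (fderiv ℝ φ) :=
    (hc.fderiv (𝕜 := ℝ)).uniformContinuous_of_continuous hdc
  obtain ⟨d1, hd1, H1⟩ := Metric.uniformContinuous_iff.1 hu1 ε hε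
  obtain ⟨d2, hd2, H2⟩ := Metric.uniformContinuous_iff.1 hu2 ε hε
  set ρ := min r (min d1 d2) with hρ
  have hρ0 : 0 < ρ := by positivity
  let B : ContDiffBump (0 : Euc n) := ⟨ρ / 2, ρ, by positivity, by linarith⟩
  let ψ : Euc n → ℝ := convolution (B.normed volume) φ (ContinuousLinearMap.lsmul ℝ ℝ) volume
  have hsup : Function.support ψ ⊆ cthickening r (tsupport φ) := by
    intro x hx
    have := support_convolution_subset (ContinuousLinearMap.lsmul ℝ ℝ) (μ := volume) hx
    obtain ⟨a, ha, b, hb, rfl⟩ := Set.mem_add.1 this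
    rw [B.support_normed_eq] at ha
    have ha' : ‖a‖ < ρ := by simpa using ha
    refine mem_cthickening_of_dist_le _ b _ _ (subset_tsupport _ hb) ?_
    simp only [dist_eq_norm, add_sub_cancel_right]
    exact ha'.le.trans (min_le_left _ _)
  have hts : tsupport ψ ⊆ cthickening r (tsupport φ) :=
    closure_minimal hsup isClosed_cthickening
  refine ⟨ψ, ?_, ?_, hts, ?_, ?_, ?_⟩
  · exact B.hasCompactSupport_normed.contDiff_convolution_left _ B.contDiff_normed
      hφ.continuous.locallyIntegrable
  · exact hc.isCompact.cthickening.of_isClosed_subset (isClosed_tsupport _) hts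
  · intro x
    refine integral_nonneg fun t => ?_
    simp only [ContinuousLinearMap.lsmul_apply, smul_eq_mul]
    exact mul_nonneg (B.nonneg_normed _) (h0 _)
  · intro x
    have := B.dist_normed_convolution_le (μ := volume) (g := φ) (x₀ := x) (ε := ε)
      hφ.continuous.aestronglyMeasurable (fun z hz => (H1 (lt_of_lt_of_le hz
        ((min_le_right _ _).trans (min_le_left _ _)))).le)
    rwa [Real.dist_eq] at this
  · intro x
    have := B.dist_normed_convolution_le (μ := volume) (g := fderiv ℝ φ) (x₀ := x) (ε := ε)
      hdc.aestronglyMeasurable (fun z hz => (H2 (lt_of_lt_of_le hz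
        ((min_le_right _ _).trans (min_le_right _ _)))).le)
    have hd := hc.hasFDerivAt_convolution_right (ContinuousLinearMap.lsmul ℝ ℝ) (μ := volume)
      (f := B.normed volume)
      (B.continuous_normed.locallyIntegrable) hφ x
    have hL : (ContinuousLinearMap.lsmul ℝ ℝ : ℝ →L[ℝ] ℝ →L[ℝ] ℝ).precompR (Euc n)
        = ContinuousLinearMap.lsmul ℝ ℝ := by
      ext a b; simp
    rw [hL] at hd
    unfold gradient
    rw [← map_sub, LinearIsometryEquiv.norm_map, ← dist_eq_norm]
    rw [show fderiv ℝ ψ x = _ from hd.fderiv]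
    exact this

lemma measurable_gradient {n : ℕ} (v : Euc n → ℝ) : Measurable (gradient v) := by
  unfold gradient
  exact (LinearIsometryEquiv.continuous _).measurable.comp (measurable_fderiv ℝ v)

lemma continuousOn_gradient {n : ℕ} {v : Euc n → ℝ} {U : Set (Euc n)} (hU : IsOpen U)
    (hv : ContDiffOn ℝ 1 v U) : ContinuousOn (gradient v) U := by
  unfold gradient
  exact (LinearIsometryEquiv.continuous _).comp_continuousOn
    (hv.continuousOn_fderiv_of_isOpen hU (by norm_num))

lemma gradient_zero_off {n : ℕ} {ψ : Euc n → ℝ} {x : Euc n} (hx : x ∉ tsupport ψ) :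
    gradient ψ x = 0 := by
  unfold gradient
  rw [show fderiv ℝ ψ x = 0 by
    by_contra h
    exact hx (support_fderiv_subset ℝ h)]
  simp

lemma integrable_of_bdd {n : ℕ} {K : Set (Euc n)} (hK : IsCompact K) {F : Euc n → ℝ}
    (hF : Measurable F) (h0 : ∀ x ∉ K, F x = 0) {N : ℝ} (hN : ∀ x ∈ K, |F x| ≤ N) :
    Integrable F := by
  rw [← integrableOn_iff_integrable_of_support_subset (s := K)]
  · refine Measure.integrableOn_of_bounded (M := N) hK.measure_lt_top.ne hF.aestronglyMeasurable ?_
    exact (ae_restrict_iff' hK.measurableSet).2 (Eventually.of_forall fun x hx => hN x hx)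
  · intro x hx
    by_contra h
    exact hx (h0 x h)

lemma weak_C1 {n : ℕ} {A : Euc n → Euc n → Euc n} {p C₁ C₂ α : ℝ} (hp : 1 < p) (hC₂ : 0 < C₂)
    (hA : StructCond A p C₁ C₂) (hα : 0 < α) {b : Euc n → ℝ} (hbm : Measurable b)
    (hb0 : ∀ x, 0 ≤ b x) (hbl : LocBdd b) {U : Set (Euc n)} (hU : IsOpen U)
    {v : Euc n → ℝ} (hv : ContDiffOn ℝ 1 v U) {a : Euc n → ℝ} (ham : Measurable a) {h : ℝ}
    (hah : ∀ x, |a x| ≤ h) (hw : IsWeakSol A b α a U v)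
    {φ : Euc n → ℝ} (hφ : ContDiff ℝ 1 φ) (hc : HasCompactSupport φ) (hs : tsupport φ ⊆ U)
    (h0 : ∀ x, 0 ≤ φ x) :
    Integrable (fun x => -⟪A x (gradient v x), gradient φ x⟫
        + b x * ‖gradient v x‖ ^ α * φ x - a x * φ x) ∧
    0 ≤ ∫ x in U, (-⟪A x (gradient v x), gradient φ x⟫
        + b x * ‖gradient v x‖ ^ α * φ x - a x * φ x) := by
  obtain ⟨K, hK, hKU, hφK, happ⟩ := smooth_approx hU hφ hc hs h0
  have hgc : ContinuousOn (fun x => ‖gradient v x‖) K :=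
    ((continuousOn_gradient hU hv).mono hKU).norm
  obtain ⟨G, hG⟩ := (hK.image_of_continuousOn hgc).bddAbove
  have hG' : ∀ x ∈ K, ‖gradient v x‖ ≤ |G| := fun x hx =>
    (hG (mem_image_of_mem _ hx)).trans (le_abs_self G)
  obtain ⟨Cb, hCb⟩ := hbl K hK
  have hAm : Measurable (fun x => A x (gradient v x)) :=
    hA.1.comp (measurable_id.prodMk (measurable_gradient v))
  have hgm : Measurable (fun x => b x * ‖gradient v x‖ ^ α) :=
    hbm.mul ((measurable_gradient v).norm.pow_const α)
  set N : ℝ := C₂ * |G| ^ (p - 1) + |Cb| * |G| ^ α + |h| with hNdef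
  have hN0 : 0 ≤ N := by positivity
  have hN1 : ∀ x ∈ K, ‖A x (gradient v x)‖ ≤ N := fun x hx => by
    refine (hA.2 x _).2.trans ?_
    have : ‖gradient v x‖ ^ (p - 1) ≤ |G| ^ (p - 1) :=
      Real.rpow_le_rpow (norm_nonneg _) (hG' x hx) (by linarith)
    have h2 : C₂ * ‖gradient v x‖ ^ (p - 1) ≤ C₂ * |G| ^ (p - 1) := by gcongr
    have h3 : 0 ≤ |Cb| * |G| ^ α := by positivity
    have h4 := abs_nonneg h
    linarith
  have hN2 : ∀ x ∈ K, |b x * ‖gradient v x‖ ^ α| ≤ N := fun x hx => by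
    have : ‖gradient v x‖ ^ α ≤ |G| ^ α :=
      Real.rpow_le_rpow (norm_nonneg _) (hG' x hx) hα.le
    rw [abs_of_nonneg (mul_nonneg (hb0 x) (by positivity))]
    have h2 : b x * ‖gradient v x‖ ^ α ≤ |Cb| * |G| ^ α :=
      mul_le_mul ((hCb x hx).trans (le_abs_self _)) this (by positivity) (by positivity)
    have h3 : 0 ≤ C₂ * |G| ^ (p - 1) := by positivity
    have h4 := abs_nonneg h
    linarith
  have hN3 : ∀ x, |a x| ≤ N := fun x => by
    have h1 := hah x
    have h2 : 0 ≤ |Cb| * |G| ^ α := by positivity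
    have h3 : 0 ≤ C₂ * |G| ^ (p - 1) := by positivity
    have h4 := le_abs_self h
    linarith
  -- integrability for C¹ functions supported in K
  have key : ∀ ψ : Euc n → ℝ, ContDiff ℝ 1 ψ → HasCompactSupport ψ → tsupport ψ ⊆ K →
      Integrable (fun x => ⟪A x (gradient v x), gradient ψ x⟫) ∧
      Integrable (fun x => b x * ‖gradient v x‖ ^ α * ψ x) ∧
      Integrable (fun x => a x * ψ x) := by
    intro ψ hψ hψc hψK
    have hψ0 : ∀ x ∉ K, ψ x = 0 := fun x hx => image_eq_zero_of_notMem_tsupport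
      (fun h => hx (hψK h))
    have hψ1 : ∀ x ∉ K, gradient ψ x = 0 := fun x hx => gradient_zero_off (fun h => hx (hψK h))
    have hgcont : Continuous (gradient ψ) := by
      rw [← continuousOn_univ]
      exact continuousOn_gradient isOpen_univ hψ.contDiffOn
    obtain ⟨M1, hM1⟩ := (hK.image_of_continuousOn hgcont.norm.continuousOn).bddAbove
    obtain ⟨M2, hM2⟩ := (hK.image_of_continuousOn hψ.continuous.abs.continuousOn).bddAbove
    refine ⟨integrable_of_bdd hK (hAm.inner hgcont.measurable) (fun x hx => by simp [hψ1 x hx])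
      (N := N * M1) ?_, integrable_of_bdd hK (hgm.mul hψ.continuous.measurable)
      (fun x hx => by simp [hψ0 x hx]) (N := N * M2) ?_,
      integrable_of_bdd hK (ham.mul hψ.continuous.measurable)
      (fun x hx => by simp [hψ0 x hx]) (N := N * M2) ?_⟩
    · intro x hx
      exact (abs_real_inner_le_norm _ _).trans (mul_le_mul (hN1 x hx)
        (hM1 (mem_image_of_mem _ hx)) (norm_nonneg _) hN0)
    · intro x hx
      rw [abs_mul]
      exact mul_le_mul (hN2 x hx) (hM2 (mem_image_of_mem _ hx)) (abs_nonneg _) hN0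
    · intro x hx
      rw [abs_mul]
      exact mul_le_mul (hN3 x) (hM2 (mem_image_of_mem _ hx)) (abs_nonneg _) hN0
  obtain ⟨i1, i2, i3⟩ := key φ hφ hc hφK
  have hIφ : Integrable (fun x => -⟪A x (gradient v x), gradient φ x⟫
        + b x * ‖gradient v x‖ ^ α * φ x - a x * φ x) := (i1.neg.add i2).sub i3
  refine ⟨hIφ, ?_⟩
  by_contra hneg
  push Not at hneg
  set J := ∫ x in U, (-⟪A x (gradient v x), gradient φ x⟫
        + b x * ‖gradient v x‖ ^ α * φ x - a x * φ x) with hJ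
  set V := volume.real K with hV
  have hV0 : 0 ≤ V := measureReal_nonneg
  obtain ⟨ψ, hψ, hψc, hψK, hψ0, hd1, hd2⟩ := happ (-J / (2 * (3 * N * V + 1)))
    (div_pos (by linarith) (by positivity))
  set ε := -J / (2 * (3 * N * V + 1)) with hε
  have hε0 : 0 < ε := div_pos (by linarith) (by positivity)
  obtain ⟨k1, k2, k3⟩ := key ψ (hψ.of_le (by exact_mod_cast le_top)) hψc hψK
  have hIψ : Integrable (fun x => -⟪A x (gradient v x), gradient ψ x⟫
        + b x * ‖gradient v x‖ ^ α * ψ x - a x * ψ x) := (k1.neg.add k2).sub k3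
  have hJψ : 0 ≤ ∫ x in U, (-⟪A x (gradient v x), gradient ψ x⟫
        + b x * ‖gradient v x‖ ^ α * ψ x - a x * ψ x) := by
    have := hw ψ hψ hψc (hψK.trans hKU) hψ0
    have k1' : Integrable (fun x => -⟪A x (gradient v x), gradient ψ x⟫) := k1.neg
    have k12 : Integrable (fun x => -⟪A x (gradient v x), gradient ψ x⟫
        + b x * ‖gradient v x‖ ^ α * ψ x) := k1'.add k2
    rw [integral_sub k12.integrableOn k3.integrableOn,
      integral_add k1'.integrableOn k2.integrableOn, integral_neg]
    linarith
  have hdiff : (∫ x in U, (-⟪A x (gradient v x), gradient ψ x⟫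
        + b x * ‖gradient v x‖ ^ α * ψ x - a x * ψ x)) - J ≤ 3 * N * ε * V := by
    rw [hJ, ← integral_sub hIψ.integrableOn hIφ.integrableOn]
    rw [setIntegral_eq_of_subset_of_forall_sdiff_eq_zero hU.measurableSet hKU]
    · refine (le_abs_self _).trans ?_
      rw [← Real.norm_eq_abs]
      refine norm_setIntegral_le_of_norm_le_const hK.measure_lt_top ?_
      intro x hx
      have e1 : |⟪A x (gradient v x), gradient ψ x - gradient φ x⟫| ≤ N * ε :=
        (abs_real_inner_le_norm _ _).trans (mul_le_mul (hN1 x hx) (hd2 x) (norm_nonneg _) hN0)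
      have e2 : |b x * ‖gradient v x‖ ^ α * (ψ x - φ x)| ≤ N * ε := by
        rw [abs_mul]
        exact mul_le_mul (hN2 x hx) (hd1 x) (abs_nonneg _) hN0
      have e3 : |a x * (ψ x - φ x)| ≤ N * ε := by
        rw [abs_mul]
        exact mul_le_mul (hN3 x) (hd1 x) (abs_nonneg _) hN0
      rw [inner_sub_right] at e1
      rw [Real.norm_eq_abs]
      rw [abs_le] at *
      constructor <;> linarith [e1.1, e1.2, e2.1, e2.2, e3.1, e3.2]
    · intro x hx
      have z1 := image_eq_zero_of_notMem_tsupport (fun h => hx.2 (hψK h))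
      have z2 := image_eq_zero_of_notMem_tsupport (fun h => hx.2 (hφK h))
      have z3 := gradient_zero_off (fun h => hx.2 (hψK h))
      have z4 := gradient_zero_off (fun h => hx.2 (hφK h))
      simp [z1, z2, z3, z4]
  have : ε * (2 * (3 * N * V + 1)) = -J := by
    rw [hε]; field_simp
  nlinarith [mul_nonneg hN0 hV0]

/-- cutoff function, positive exactly in the open ball -/
def cut {n : ℕ} (y : Euc n) (ρ : ℝ) (x : Euc n) : ℝ := max (1 - ‖x - y‖ ^ 2 / ρ ^ 2) 0

def trunc {n : ℕ} (v : Euc n → ℝ) (k : ℝ) (x : Euc n) : ℝ := max (v x - k) 0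

def tst {n : ℕ} (v : Euc n → ℝ) (k : ℝ) (y : Euc n) (ρ q : ℝ) (x : Euc n) : ℝ :=
  (trunc v k x) ^ 2 * (cut y ρ x) ^ q

lemma cut_nonneg {n : ℕ} (y : Euc n) (ρ : ℝ) (x : Euc n) : 0 ≤ cut y ρ x := le_max_right _ _

lemma trunc_nonneg {n : ℕ} (v : Euc n → ℝ) (k : ℝ) (x : Euc n) : 0 ≤ trunc v k x :=
  le_max_right _ _

lemma cut_le_one {n : ℕ} (y : Euc n) (ρ : ℝ) (x : Euc n) : cut y ρ x ≤ 1 := by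
  unfold cut
  apply max_le _ zero_le_one
  have : 0 ≤ ‖x - y‖ ^ 2 / ρ ^ 2 := by positivity
  linarith

lemma cut_off {n : ℕ} {y : Euc n} {ρ : ℝ} (hρ : 0 < ρ) {x : Euc n} (hx : x ∉ closedBall y ρ) :
    cut y ρ x = 0 := by
  unfold cut
  apply max_eq_right
  rw [mem_closedBall, dist_eq_norm, not_le] at hx
  have : 1 ≤ ‖x - y‖ ^ 2 / ρ ^ 2 := by
    rw [le_div_iff₀ (by positivity)]
    nlinarith
  linarith

lemma cut_continuous {n : ℕ} (y : Euc n) (ρ : ℝ) : Continuous (cut y ρ) := by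
  unfold cut; fun_prop

lemma tst_nonneg {n : ℕ} (v : Euc n → ℝ) (k : ℝ) (y : Euc n) (ρ q : ℝ) (x : Euc n) :
    0 ≤ tst v k y ρ q x := mul_nonneg (sq_nonneg _) (Real.rpow_nonneg (cut_nonneg _ _ _) _)

lemma tst_off {n : ℕ} (v : Euc n → ℝ) (k : ℝ) {y : Euc n} {ρ q : ℝ} (hρ : 0 < ρ) (hq : 1 < q)
    {x : Euc n} (hx : x ∉ closedBall y ρ) : tst v k y ρ q x = 0 := by
  unfold tst
  rw [cut_off hρ hx, Real.zero_rpow (by linarith), mul_zero]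

lemma tst_tsupport {n : ℕ} (v : Euc n → ℝ) (k : ℝ) {y : Euc n} {ρ q : ℝ} (hρ : 0 < ρ)
    (hq : 1 < q) : tsupport (tst v k y ρ q) ⊆ closedBall y ρ := by
  refine closure_minimal ?_ isClosed_closedBall
  intro x hx
  by_contra h
  exact hx (tst_off v k hρ hq h)

lemma tst_compact {n : ℕ} (v : Euc n → ℝ) (k : ℝ) {y : Euc n} {ρ q : ℝ} (hρ : 0 < ρ)
    (hq : 1 < q) : HasCompactSupport (tst v k y ρ q) :=
  (isCompact_closedBall y ρ).of_isClosed_subset (isClosed_tsupport _) (tst_tsupport v k hρ hq)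

lemma tst_eq {n : ℕ} (v : Euc n → ℝ) (k : ℝ) (y : Euc n) (ρ q : ℝ) :
    tst v k y ρ q = fun x => (fun s : ℝ => (max s 0) ^ (2:ℝ)) (v x - k) *
      (fun s : ℝ => (max s 0) ^ q) (1 - ‖x - y‖ ^ 2 / ρ ^ 2) := by
  funext x; simp [tst, trunc, cut]

lemma tst_contDiff {n : ℕ} {U : Set (Euc n)} (hU : IsOpen U) {v : Euc n → ℝ}
    (hv : ContDiffOn ℝ 1 v U) (k : ℝ) {y : Euc n} {ρ q : ℝ} (hρ : 0 < ρ) (hq : 1 < q)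
    (hB : closedBall y ρ ⊆ U) : ContDiff ℝ 1 (tst v k y ρ q) := by
  rw [contDiff_iff_contDiffAt]
  intro x
  by_cases hx : x ∈ closedBall y ρ
  · rw [tst_eq]
    have hvx : ContDiffAt ℝ 1 v x := hv.contDiffAt (hU.mem_nhds (hB hx))
    refine ContDiffAt.mul ?_ ?_
    · exact (pp_contDiff (q := 2) (by norm_num)).contDiffAt.comp x (hvx.sub contDiffAt_const)
    · refine (pp_contDiff hq).contDiffAt.comp x ?_
      have : ContDiff ℝ 1 (fun x : Euc n => 1 - ‖x - y‖ ^ 2 / ρ ^ 2) :=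
        contDiff_const.sub (((contDiff_id.sub contDiff_const).norm_sq ℝ).div_const _)
      exact this.contDiffAt
  · have : tst v k y ρ q =ᶠ[nhds x] fun _ => (0:ℝ) := by
      filter_upwards [isClosed_closedBall.isOpen_compl.mem_nhds hx] with z hz
      exact tst_off v k hρ hq hz
    exact contDiffAt_const.congr_of_eventuallyEq this

lemma tst_fderiv {n : ℕ} {U : Set (Euc n)} (hU : IsOpen U) {v : Euc n → ℝ}
    (hv : ContDiffOn ℝ 1 v U) (k : ℝ) (y : Euc n) (ρ : ℝ) {q : ℝ} (hq : 1 < q)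
    {x : Euc n} (hx : x ∈ U) (z : Euc n) :
    fderiv ℝ (tst v k y ρ q) x z = 2 * trunc v k x * cut y ρ x ^ q * fderiv ℝ v x z
      + trunc v k x ^ 2 * (q * cut y ρ x ^ (q - 1)) * (-(2 / ρ ^ 2) * ⟪x - y, z⟫) := by
  have hvx : HasFDerivAt v (fderiv ℝ v x) x :=
    ((hv.contDiffAt (hU.mem_nhds hx)).differentiableAt (by norm_num)).hasFDerivAt
  have h1 := (pp_hasDerivAt (q := 2) (by norm_num) (v x - k)).comp_hasFDerivAt x
    (hvx.sub_const k)
  have h3 : HasFDerivAt (fun x : Euc n => 1 - ‖x - y‖ ^ 2 / ρ ^ 2)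
      (-((2 / ρ ^ 2) • (innerSL ℝ (x - y)))) x := by
    have h4 : HasFDerivAt (fun x : Euc n => ‖x - y‖ ^ 2) (2 • (innerSL ℝ (x - y))) x := by
      have := ((hasFDerivAt_id x).sub_const y).norm_sq
      simpa using this
    have h5 := ((h4.mul_const ((ρ ^ 2)⁻¹)).const_sub 1)
    simp only [div_eq_mul_inv]
    refine h5.congr_fderiv ?_
    ext z
    simp [inner_sub_left]
    ring
  have h2 := (pp_hasDerivAt hq (1 - ‖x - y‖ ^ 2 / ρ ^ 2)).comp_hasFDerivAt x h3
  have h := h1.mul h2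
  rw [tst_eq]
  have h' := h.fderiv
  rw [show fderiv ℝ (fun x => (fun s : ℝ => (max s 0) ^ (2:ℝ)) (v x - k) *
      (fun s : ℝ => (max s 0) ^ q) (1 - ‖x - y‖ ^ 2 / ρ ^ 2)) x = _ from h']
  simp [trunc, cut, inner_sub_left]
  norm_num
  ring

lemma interp {t τ p α : ℝ} (ht : 0 ≤ t) (hτ : 0 < τ) (hα0 : 0 < α)
    (h1 : p - 1 ≤ α) (h2 : α ≤ p) :
    t ^ α ≤ τ ^ (α - p) * t ^ p + τ ^ (α - p + 1) * t ^ (p - 1) := by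
  rcases eq_or_lt_of_le ht with h | h
  · rw [← h, Real.zero_rpow hα0.ne']
    positivity
  · have hA : 0 ≤ τ ^ (α - p) * t ^ p := by positivity
    have hB : 0 ≤ τ ^ (α - p + 1) * t ^ (p - 1) := by positivity
    rcases le_total τ t with hc | hc
    · have : t ^ α = t ^ (α - p) * t ^ p := by rw [← Real.rpow_add h]; congr 1; ring
      have h3 : t ^ (α - p) ≤ τ ^ (α - p) := Real.rpow_le_rpow_of_nonpos hτ hc (by linarith)
      have : t ^ α ≤ τ ^ (α - p) * t ^ p := by rw [this]; gcongr
      linarith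
    · have : t ^ α = t ^ (α - p + 1) * t ^ (p - 1) := by rw [← Real.rpow_add h]; congr 1; ring
      have h3 : t ^ (α - p + 1) ≤ τ ^ (α - p + 1) := Real.rpow_le_rpow ht hc (by linarith)
      have : t ^ α ≤ τ ^ (α - p + 1) * t ^ (p - 1) := by rw [this]; gcongr
      linarith

lemma young' {X Z ε p : ℝ} (hX : 0 ≤ X) (hZ : 0 ≤ Z) (hε : 0 < ε) (hp : 1 < p) :
    X ^ (p - 1) * Z ≤ ε * X ^ p + ε ^ (1 - p) * Z ^ p := by
  have hA : 0 ≤ ε * X ^ p := by positivity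
  have hB : 0 ≤ ε ^ (1 - p) * Z ^ p := by positivity
  rcases le_total Z (ε * X) with h | h
  · rcases eq_or_lt_of_le hX with h0 | h0
    · rw [← h0, Real.zero_rpow (by linarith), zero_mul]
      rw [← h0] at hA
      linarith
    · have : X ^ p = X ^ (p - 1) * X := by
        rw [← Real.rpow_add_one h0.ne']; congr 1; ring
      have : X ^ (p - 1) * Z ≤ ε * X ^ p := by
        rw [this]
        calc X ^ (p - 1) * Z ≤ X ^ (p - 1) * (ε * X) := by gcongr
          _ = _ := by ring
      linarith
  · have hX' : X ≤ Z / ε := by rw [le_div_iff₀ hε]; linarith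
    have h1 : X ^ (p - 1) ≤ (Z / ε) ^ (p - 1) := Real.rpow_le_rpow hX hX' (by linarith)
    have h2 : X ^ (p - 1) * Z ≤ ε ^ (1 - p) * Z ^ p := by
      rcases eq_or_lt_of_le hZ with h0 | h0
      · rw [← h0, mul_zero]; rw [← h0] at hB; exact hB
      · calc X ^ (p - 1) * Z ≤ (Z / ε) ^ (p - 1) * Z := by gcongr
          _ = ε ^ (1 - p) * (Z ^ (p - 1) * Z) := by
            rw [Real.div_rpow hZ hε.le, show (1 - p) = -(p - 1) by ring, Real.rpow_neg hε.le]
            field_simp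
          _ = _ := by rw [← Real.rpow_add_one h0.ne']; congr 2; ring
    linarith

/-- the pointwise inequality behind the energy estimate -/
lemma pointwise_energy {p α C₁ C₂ δ R β b t w e h ρ Q1 Q2 : ℝ} (hp : 1 < p) (hC₁ : 0 < C₁)
    (hC₂ : 0 < C₂) (h1 : p - 1 ≤ α) (h2 : α ≤ p) (hδ : 0 < δ) (hR : 0 < R) (hb0 : 0 ≤ b)
    (hb : b ≤ β) (hβ : δ ^ (α - p + 1) * R ^ (p - α) * β ≤ C₁ / 4)
    (ht : 0 ≤ t) (hw : 0 ≤ w) (hw2 : w ≤ 2 * δ) (he : 0 ≤ e) (he1 : e ≤ 1)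
    (hρ : R / 8 ≤ ρ)
    (hQ1 : C₁ * t ^ p ≤ Q1) (hQ2 : |Q2| ≤ 2 / ρ * (C₂ * t ^ (p - 1))) :
    -(2 * w * e ^ p * Q1 + w ^ 2 * (p * e ^ (p - 1)) * Q2) + b * t ^ α * (w ^ 2 * e ^ p)
        - h * (w ^ 2 * e ^ p) ≤
      -(C₁ * (w * (t * e) ^ p)) - h * (w ^ 2 * e ^ p)
        + ((C₁ / 2) ^ (1 - p) * (16 * p * C₂ + C₁ / 4) ^ p * 2 ^ p) * (δ / R) ^ p * w := by
  have hρ0 : 0 < ρ := by linarith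
  set K := 16 * p * C₂ + C₁ / 4 with hK
  have hK0 : 0 < K := by positivity
  have hα0 : 0 < α := by linarith
  have hep : e ^ p ≤ e ^ (p - 1) := by
    rcases eq_or_lt_of_le he with h0 | h0
    · rw [← h0, Real.zero_rpow (by linarith), Real.zero_rpow (by linarith)]
    · exact Real.rpow_le_rpow_of_exponent_ge h0 he1 (by linarith)
  have hte : (t * e) ^ p = t ^ p * e ^ p := Real.mul_rpow ht he
  have hte' : (t * e) ^ (p - 1) = t ^ (p - 1) * e ^ (p - 1) := Real.mul_rpow ht he
  have hb1 : b * t ^ α ≤ C₁ / 4 * (t ^ p / δ + t ^ (p - 1) / R) := by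
    have hi := interp ht (div_pos hδ hR) hα0 h1 h2
    have heq : (δ / R) ^ (α - p) * t ^ p + (δ / R) ^ (α - p + 1) * t ^ (p - 1)
        = δ ^ (α - p + 1) * R ^ (p - α) * (t ^ p / δ + t ^ (p - 1) / R) := by
      rw [Real.div_rpow hδ.le hR.le, Real.div_rpow hδ.le hR.le, Real.rpow_add_one hδ.ne',
        Real.rpow_add_one hR.ne', show p - α = -(α - p) by ring, Real.rpow_neg hR.le]
      have : R ^ (α - p) ≠ 0 := (Real.rpow_pos_of_pos hR _).ne'
      field_simp
    rw [heq] at hi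
    have hnn : 0 ≤ t ^ p / δ + t ^ (p - 1) / R := by positivity
    calc b * t ^ α ≤ β * (δ ^ (α - p + 1) * R ^ (p - α) * (t ^ p / δ + t ^ (p - 1) / R)) := by
          apply mul_le_mul hb hi (by positivity) (hb0.trans hb)
      _ = (δ ^ (α - p + 1) * R ^ (p - α) * β) * (t ^ p / δ + t ^ (p - 1) / R) := by ring
      _ ≤ _ := by gcongr
  have hb2 : b * t ^ α * (w ^ 2 * e ^ p) ≤ C₁ / 2 * (w * (t * e) ^ p)
      + C₁ / 4 / R * (w ^ 2 * (t * e) ^ (p - 1)) := by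
    rw [hte, hte']
    calc b * t ^ α * (w ^ 2 * e ^ p) ≤ C₁ / 4 * (t ^ p / δ + t ^ (p - 1) / R) * (w ^ 2 * e ^ p) := by
          gcongr
      _ = C₁ / 4 * (w / δ) * (w * (t ^ p * e ^ p)) + C₁ / 4 / R * (w ^ 2 * (t ^ (p - 1) * e ^ p)) := by
          field_simp
      _ ≤ C₁ / 4 * 2 * (w * (t ^ p * e ^ p)) + C₁ / 4 / R * (w ^ 2 * (t ^ (p - 1) * e ^ (p - 1))) := by
          have : w / δ ≤ 2 := by rw [div_le_iff₀ hδ]; linarith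
          gcongr
      _ = _ := by ring
  have hq1 : 2 * C₁ * (w * (t * e) ^ p) ≤ 2 * w * e ^ p * Q1 := by
    rw [hte]
    calc 2 * C₁ * (w * (t ^ p * e ^ p)) = 2 * w * e ^ p * (C₁ * t ^ p) := by ring
      _ ≤ _ := by gcongr
  have hq2 : -(w ^ 2 * (p * e ^ (p - 1)) * Q2) ≤ 16 * p * C₂ / R * (w ^ 2 * (t * e) ^ (p - 1)) := by
    have h3 : -Q2 ≤ 2 / ρ * (C₂ * t ^ (p - 1)) := (neg_le_abs Q2).trans hQ2
    have h4 : 2 / ρ ≤ 16 / R := by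
      rw [div_le_div_iff₀ hρ0 hR]; linarith
    rw [hte']
    calc -(w ^ 2 * (p * e ^ (p - 1)) * Q2) = w ^ 2 * (p * e ^ (p - 1)) * (-Q2) := by ring
      _ ≤ w ^ 2 * (p * e ^ (p - 1)) * (16 / R * (C₂ * t ^ (p - 1))) := by
          gcongr
          exact h3.trans (by gcongr)
      _ = _ := by ring
  have hy := young' (mul_nonneg ht he) (show 0 ≤ K * w / R by positivity)
    (show 0 < C₁ / 2 by positivity) hp
  have hwp : (K * w / R) ^ p ≤ K ^ p * 2 ^ p * (δ / R) ^ p := by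
    rw [← Real.mul_rpow hK0.le (by norm_num), ← Real.mul_rpow (by positivity) (by positivity)]
    apply Real.rpow_le_rpow (by positivity) _ (by linarith)
    calc K * w / R ≤ K * (2 * δ) / R := by gcongr
      _ = _ := by ring
  have hy2 : K / R * (w ^ 2 * (t * e) ^ (p - 1)) ≤ C₁ / 2 * (w * (t * e) ^ p)
      + ((C₁ / 2) ^ (1 - p) * K ^ p * 2 ^ p) * (δ / R) ^ p * w := by
    calc K / R * (w ^ 2 * (t * e) ^ (p - 1)) = w * ((t * e) ^ (p - 1) * (K * w / R)) := by ring
      _ ≤ w * (C₁ / 2 * (t * e) ^ p + (C₁ / 2) ^ (1 - p) * (K * w / R) ^ p) := by gcongr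
      _ ≤ w * (C₁ / 2 * (t * e) ^ p + (C₁ / 2) ^ (1 - p) * (K ^ p * 2 ^ p * (δ / R) ^ p)) := by
          gcongr
      _ = _ := by ring
  have hsum : 16 * p * C₂ / R * (w ^ 2 * (t * e) ^ (p - 1))
      + C₁ / 4 / R * (w ^ 2 * (t * e) ^ (p - 1)) = K / R * (w ^ 2 * (t * e) ^ (p - 1)) := by
    rw [hK]; ring
  have hnn : 0 ≤ C₁ * (w * (t * e) ^ p) := by positivity
  linarith

def EnergyEst {n : ℕ} (v : Euc n → ℝ) (U : Set (Euc n)) (p C₁ K δ R h : ℝ) : Prop :=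
  ∀ (k : ℝ) (y : Euc n) (ρ : ℝ), 0 ≤ k → R / 8 ≤ ρ → closedBall y ρ ⊆ U →
    (∀ x ∈ closedBall y ρ, v x ≤ k + 2 * δ) →
    C₁ * (∫ x in closedBall y ρ, trunc v k x * (‖gradient v x‖ * cut y ρ x) ^ p) +
      h * (∫ x in closedBall y ρ, trunc v k x ^ 2 * cut y ρ x ^ p) ≤
      K * (δ / R) ^ p * ∫ x in closedBall y ρ, trunc v k x

lemma trunc_continuousOn {n : ℕ} {v : Euc n → ℝ} {S : Set (Euc n)} (hv : ContinuousOn v S)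
    (k : ℝ) : ContinuousOn (trunc v k) S := by
  unfold trunc
  exact (hv.sub continuousOn_const).sup continuousOn_const

lemma energy_est {n : ℕ} {A : Euc n → Euc n → Euc n} {p C₁ C₂ α : ℝ} (hp : 1 < p)
    (hC₁ : 0 < C₁) (hC₂ : 0 < C₂) (hα₁ : p - 1 ≤ α) (hα₂ : α ≤ p)
    (hA : StructCond A p C₁ C₂) {b : Euc n → ℝ} (hbm : Measurable b)
    (hb0 : ∀ x, 0 ≤ b x) (hbl : LocBdd b) {U : Set (Euc n)} (hU : IsOpen U)
    {v : Euc n → ℝ} (hv : ContDiffOn ℝ 1 v U) {h : ℝ} (hh : 0 ≤ h)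
    (hw : IsWeakSol A b α (Set.indicator {x ∈ U | 0 < v x} fun _ => h) U v)
    {β δ R : ℝ} (hδ : 0 < δ) (hR : 0 < R) (hbβ : ∀ᵐ x ∂(volume.restrict U), b x ≤ β)
    (hβ : δ ^ (α - p + 1) * R ^ (p - α) * β ≤ C₁ / 4) :
    EnergyEst v U p C₁ ((C₁ / 2) ^ (1 - p) * (16 * p * C₂ + C₁ / 4) ^ p * 2 ^ p) δ R h := by
  intro k y ρ hk hρ hB hvB
  have hρ0 : 0 < ρ := by linarith
  set K := (C₁ / 2) ^ (1 - p) * (16 * p * C₂ + C₁ / 4) ^ p * 2 ^ p with hK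
  set a := Set.indicator {x ∈ U | 0 < v x} fun _ : Euc n => h with ha
  have hvc : ContinuousOn v U := hv.continuousOn
  have hωo : IsOpen {x ∈ U | 0 < v x} := hvc.isOpen_inter_preimage hU isOpen_Ioi
  have ham : Measurable a := measurable_const.indicator hωo.measurableSet
  have hah : ∀ x, |a x| ≤ h := by
    intro x
    rw [ha]
    by_cases hx : x ∈ {x ∈ U | 0 < v x}
    · rw [indicator_of_mem hx, abs_of_nonneg hh]
    · rw [indicator_of_notMem hx, abs_zero]; exact hh
  have hBc : IsCompact (closedBall y ρ) := isCompact_closedBall y ρ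
  obtain ⟨hI, hpos⟩ := weak_C1 hp hC₂ hA (by linarith) hbm hb0 hbl hU hv ham hah hw
    (tst_contDiff hU hv k hρ0 hp hB) (tst_compact v k hρ0 hp)
    ((tst_tsupport v k hρ0 hp).trans hB) (tst_nonneg v k y ρ p)
  rw [setIntegral_eq_of_subset_of_forall_sdiff_eq_zero hU.measurableSet hB (by
    intro x hx
    have z1 := tst_off v k hρ0 hp hx.2
    have z2 := gradient_zero_off (fun hh => hx.2 (tst_tsupport v k hρ0 hp hh))
    simp [z1, z2])] at hpos
  have ht : ContinuousOn (trunc v k) (closedBall y ρ) := trunc_continuousOn (hvc.mono hB) k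
  have hg : ContinuousOn (fun x => ‖gradient v x‖) (closedBall y ρ) :=
    ((continuousOn_gradient hU hv).mono hB).norm
  have hcut : ContinuousOn (cut y ρ) (closedBall y ρ) := (cut_continuous y ρ).continuousOn
  have j1 : IntegrableOn (fun x => trunc v k x * (‖gradient v x‖ * cut y ρ x) ^ p)
      (closedBall y ρ) :=
    (ht.mul ((hg.mul hcut).rpow_const fun _ _ => Or.inr (by linarith))).integrableOn_compact hBc
  have j2 : IntegrableOn (fun x => trunc v k x ^ 2 * cut y ρ x ^ p) (closedBall y ρ) :=
    ((ht.pow 2).mul (hcut.rpow_const fun _ _ => Or.inr (by linarith))).integrableOn_compact hBc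
  have j3 : IntegrableOn (trunc v k) (closedBall y ρ) := ht.integrableOn_compact hBc
  have j1' := j1.const_mul C₁
  have j2' := j2.const_mul h
  have j3' := j3.const_mul (K * (δ / R) ^ p)
  have hle : (∫ x in closedBall y ρ, (-⟪A x (gradient v x), gradient (tst v k y ρ p) x⟫
        + b x * ‖gradient v x‖ ^ α * tst v k y ρ p x - a x * tst v k y ρ p x)) ≤
      ∫ x in closedBall y ρ, (K * (δ / R) ^ p * trunc v k x
        - C₁ * (trunc v k x * (‖gradient v x‖ * cut y ρ x) ^ p)
        - h * (trunc v k x ^ 2 * cut y ρ x ^ p)) := by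
    refine setIntegral_mono_ae_restrict hI.integrableOn ((j3'.sub j1').sub j2') ?_
    have hbB : ∀ᵐ x ∂(volume.restrict (closedBall y ρ)), b x ≤ β :=
      ae_restrict_of_ae_restrict_of_subset hB hbβ
    filter_upwards [hbB, ae_restrict_mem measurableSet_closedBall] with x hbx hx
    have hat : a x * tst v k y ρ p x = h * (trunc v k x ^ 2 * cut y ρ x ^ p) := by
      unfold tst
      by_cases hxω : x ∈ {x ∈ U | 0 < v x}
      · rw [ha, indicator_of_mem hxω]
      · have : trunc v k x = 0 := by
          unfold trunc
          apply max_eq_right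
          have : ¬ 0 < v x := fun h' => hxω ⟨hB hx, h'⟩
          linarith
        rw [this]; ring
    have hin : ⟪A x (gradient v x), gradient (tst v k y ρ p) x⟫
        = 2 * trunc v k x * cut y ρ x ^ p * ⟪gradient v x, A x (gradient v x)⟫
          + trunc v k x ^ 2 * (p * cut y ρ x ^ (p - 1)) *
            (-(2 / ρ ^ 2) * ⟪x - y, A x (gradient v x)⟫) := by
      rw [real_inner_comm, inner_gradient_left, tst_fderiv hU hv k y ρ hp (hB hx),
        ← inner_gradient_left]
    have htw : trunc v k x ≤ 2 * δ := max_le (by linarith [hvB x hx]) (by linarith)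
    have hQ2 : |(-(2 / ρ ^ 2) * ⟪x - y, A x (gradient v x)⟫)| ≤
        2 / ρ * (C₂ * ‖gradient v x‖ ^ (p - 1)) := by
      rw [abs_mul, abs_neg, abs_of_pos (by positivity)]
      have hxy : ‖x - y‖ ≤ ρ := by rw [← dist_eq_norm]; exact hx
      have h1 : |⟪x - y, A x (gradient v x)⟫| ≤ ρ * (C₂ * ‖gradient v x‖ ^ (p - 1)) :=
        (abs_real_inner_le_norm _ _).trans
          (mul_le_mul hxy (hA.2 x _).2 (norm_nonneg _) hρ0.le)
      calc 2 / ρ ^ 2 * |⟪x - y, A x (gradient v x)⟫|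
          ≤ 2 / ρ ^ 2 * (ρ * (C₂ * ‖gradient v x‖ ^ (p - 1))) := by gcongr
        _ = _ := by field_simp
    have := pointwise_energy (h := h) hp hC₁ hC₂ hα₁ hα₂ hδ hR (hb0 x) hbx hβ
      (norm_nonneg (gradient v x))
      (trunc_nonneg v k x) htw (cut_nonneg y ρ x) (cut_le_one y ρ x) hρ (hA.2 x _).1 hQ2
    rw [← hin] at this
    have htst : tst v k y ρ p x = trunc v k x ^ 2 * cut y ρ x ^ p := rfl
    rw [hat, htst]
    linarith
  have hfin := hpos.trans hle
  have j31 : IntegrableOn (fun x => K * (δ / R) ^ p * trunc v k x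
        - C₁ * (trunc v k x * (‖gradient v x‖ * cut y ρ x) ^ p)) (closedBall y ρ) := j3'.sub j1'
  rw [integral_sub j31 j2', integral_sub j3' j1', integral_const_mul,
    integral_const_mul, integral_const_mul] at hfin
  linarith

lemma sobolev_step {n : ℕ} {q : ℝ} (hq : Real.HolderConjugate (n : ℝ) q)
    {p C₁ K δ R h : ℝ} (hp : 1 < p) (hC₁ : 0 < C₁) (hK : 0 < K) (hδ : 0 < δ) (hR : 0 < R)
    (hh : 0 ≤ h) {U : Set (Euc n)} (hU : IsOpen U)
    {v : Euc n → ℝ} (hv : ContDiffOn ℝ 1 v U) (hE : EnergyEst v U p C₁ K δ R h)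
    {k : ℝ} {y : Euc n} {ρ : ℝ} (hk : 0 ≤ k) (hρ : R / 8 ≤ ρ) (hB : closedBall y ρ ⊆ U)
    (hvB : ∀ x ∈ closedBall y ρ, v x ≤ k + 2 * δ) :
    (∫ x in closedBall y ρ, (trunc v k x ^ 2 * cut y ρ x ^ 2) ^ q) ≤
      (lintegralPowLePowLIntegralFDerivConst (volume : Measure (Euc n)) q : ℝ) *
        ((2 * (K / C₁ + 1) + 64) * (δ / R) * ∫ x in closedBall y ρ, trunc v k x) ^ q := by
  have hρ0 : 0 < ρ := by linarith
  have hq1 : 1 < q := hq.symm.lt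
  have he := hE k y ρ hk hρ hB hvB
  set S := lintegralPowLePowLIntegralFDerivConst (volume : Measure (Euc n)) q
  have hBc : IsCompact (closedBall y ρ) := isCompact_closedBall y ρ
  have hvc : ContinuousOn v U := hv.continuousOn
  have ht : ContinuousOn (trunc v k) (closedBall y ρ) := trunc_continuousOn (hvc.mono hB) k
  have hg : ContinuousOn (fun x => ‖gradient v x‖) (closedBall y ρ) :=
    ((continuousOn_gradient hU hv).mono hB).norm
  have hcut : ContinuousOn (cut y ρ) (closedBall y ρ) := (cut_continuous y ρ).continuousOn
  have j1 : IntegrableOn (fun x => trunc v k x * (‖gradient v x‖ * cut y ρ x) ^ p)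
      (closedBall y ρ) :=
    (ht.mul ((hg.mul hcut).rpow_const fun _ _ => Or.inr (by linarith))).integrableOn_compact hBc
  have j3 : IntegrableOn (trunc v k) (closedBall y ρ) := ht.integrableOn_compact hBc
  set u := tst v k y ρ 2 with hu
  have h12 : (1:ℝ) < 2 := by norm_num
  have hucd : ContDiff ℝ 1 u := tst_contDiff hU hv k hρ0 h12 hB
  have hucs : HasCompactSupport u := tst_compact v k hρ0 h12
  have hfi : Integrable (fderiv ℝ u) :=
    (hucd.continuous_fderiv (by norm_num)).integrable_of_hasCompactSupport (hucs.fderiv (𝕜 := ℝ))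
  have hw0 : 0 ≤ ∫ x in closedBall y ρ, trunc v k x :=
    integral_nonneg fun x => trunc_nonneg v k x
  have hbound : ∫ x, ‖fderiv ℝ u x‖ ≤
      (2 * (K / C₁ + 1) + 64) * (δ / R) * ∫ x in closedBall y ρ, trunc v k x := by
    have h1 : ∫ x, ‖fderiv ℝ u x‖ = ∫ x in closedBall y ρ, ‖fderiv ℝ u x‖ := by
      symm
      apply setIntegral_eq_integral_of_forall_compl_eq_zero
      intro x hx
      rw [norm_eq_zero]
      by_contra h'
      exact hx (tst_tsupport v k hρ0 h12 (support_fderiv_subset ℝ h'))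
    have h2 : ∫ x in closedBall y ρ, ‖fderiv ℝ u x‖ ≤
        ∫ x in closedBall y ρ, (2 * (δ / R) * ((R / δ) ^ p) *
          (trunc v k x * (‖gradient v x‖ * cut y ρ x) ^ p) + (2 + 64) * (δ / R) * trunc v k x) := by
      refine setIntegral_mono_on hfi.norm.integrableOn
        ((j1.const_mul _).add (j3.const_mul _)) measurableSet_closedBall ?_
      intro x hx
      set w := trunc v k x with hwdef
      set e := cut y ρ x with hedef
      set t := ‖gradient v x‖ with htdef
      have w0 : 0 ≤ w := trunc_nonneg v k x
      have e0 : 0 ≤ e := cut_nonneg y ρ x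
      have e1 : e ≤ 1 := cut_le_one y ρ x
      have t0 : 0 ≤ t := norm_nonneg _
      have hw2 : w ≤ 2 * δ := max_le (by linarith [hvB x hx]) (by linarith)
      have hxy : ‖x - y‖ ≤ ρ := by rw [← dist_eq_norm]; exact hx
      have hn1 : ‖fderiv ℝ u x‖ ≤ 2 * w * (t * e) + w * (64 * (δ / R)) := by
        refine ContinuousLinearMap.opNorm_le_bound _ (by positivity) fun z => ?_
        rw [hu, tst_fderiv hU hv k y ρ h12 (hB hx), ← inner_gradient_left]
        have b1 : |⟪gradient v x, z⟫| ≤ t * ‖z‖ := abs_real_inner_le_norm _ _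
        have b2 : |⟪x - y, z⟫| ≤ ρ * ‖z‖ := (abs_real_inner_le_norm _ _).trans (by gcongr)
        have b3 : e ^ (2:ℝ) ≤ e := by
          rw [Real.rpow_two]; nlinarith
        have b4 : e ^ ((2:ℝ) - 1) ≤ 1 := by
          norm_num; exact e1
        have b5 : 2 / ρ ≤ 16 / R := by rw [div_le_div_iff₀ hρ0 hR]; linarith
        rw [Real.norm_eq_abs]
        have e20 : 0 ≤ e ^ (2:ℝ) := by positivity
        have e21 : 0 ≤ e ^ ((2:ℝ) - 1) := by positivity
        calc |2 * w * e ^ (2:ℝ) * ⟪gradient v x, z⟫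
              + w ^ 2 * (2 * e ^ ((2:ℝ) - 1)) * (-(2 / ρ ^ 2) * ⟪x - y, z⟫)|
            ≤ 2 * w * e ^ (2:ℝ) * |⟪gradient v x, z⟫|
              + w ^ 2 * (2 * e ^ ((2:ℝ) - 1)) * ((2 / ρ ^ 2) * |⟪x - y, z⟫|) := by
              refine (abs_add_le _ _).trans (le_of_eq ?_)
              simp only [abs_mul, abs_neg, abs_pow, abs_of_nonneg w0, abs_of_nonneg e20,
                abs_of_nonneg e21, abs_two, abs_div, abs_of_pos hρ0]
          _ ≤ 2 * w * e * (t * ‖z‖) + w ^ 2 * (2 * 1) * ((2 / ρ ^ 2) * (ρ * ‖z‖)) := by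
              gcongr
          _ = 2 * w * e * (t * ‖z‖) + w * w * 2 * (2 / ρ) * ‖z‖ := by
              field_simp
          _ ≤ 2 * w * e * (t * ‖z‖) + w * (2 * δ) * 2 * (16 / R) * ‖z‖ := by gcongr
          _ = _ := by ring
      refine hn1.trans ?_
      have hX : t * e ≤ δ / R * ((R / δ) ^ p * (t * e) ^ p + 1) := by
        rw [← Real.mul_rpow (by positivity) (by positivity)]
        have hX0 : 0 ≤ R / δ * (t * e) := by positivity
        have : R / δ * (t * e) ≤ (R / δ * (t * e)) ^ p + 1 := by
          rcases le_total (R / δ * (t * e)) 1 with hc | hc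
          · have := Real.rpow_nonneg hX0 p
            linarith
          · have := Real.rpow_le_rpow_of_exponent_le hc hp.le
            rw [Real.rpow_one] at this
            linarith
        calc t * e = δ / R * (R / δ * (t * e)) := by field_simp
          _ ≤ _ := by gcongr
      calc 2 * w * (t * e) + w * (64 * (δ / R))
          ≤ 2 * w * (δ / R * ((R / δ) ^ p * (t * e) ^ p + 1)) + w * (64 * (δ / R)) := by gcongr
        _ = _ := by ring
    rw [h1]
    refine h2.trans ?_
    rw [integral_add (j1.const_mul _) (j3.const_mul _), integral_const_mul, integral_const_mul]
    have hnn : 0 ≤ h * (∫ x in closedBall y ρ, trunc v k x ^ 2 * cut y ρ x ^ p) :=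
      mul_nonneg hh (integral_nonneg fun x =>
        mul_nonneg (sq_nonneg _) (Real.rpow_nonneg (cut_nonneg _ _ _) _))
    have h3 : (∫ x in closedBall y ρ, trunc v k x * (‖gradient v x‖ * cut y ρ x) ^ p) ≤
        K / C₁ * (δ / R) ^ p * ∫ x in closedBall y ρ, trunc v k x := by
      rw [div_mul_eq_mul_div, div_mul_eq_mul_div, le_div_iff₀ hC₁]
      linarith
    have h4 : (R / δ) ^ p * (δ / R) ^ p = 1 := by
      rw [← Real.mul_rpow (by positivity) (by positivity)]
      rw [show R / δ * (δ / R) = 1 by field_simp, Real.one_rpow]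
    calc 2 * (δ / R) * (R / δ) ^ p *
          (∫ x in closedBall y ρ, trunc v k x * (‖gradient v x‖ * cut y ρ x) ^ p)
          + (2 + 64) * (δ / R) * ∫ x in closedBall y ρ, trunc v k x
        ≤ 2 * (δ / R) * (R / δ) ^ p * (K / C₁ * (δ / R) ^ p * ∫ x in closedBall y ρ, trunc v k x)
          + (2 + 64) * (δ / R) * ∫ x in closedBall y ρ, trunc v k x := by gcongr
      _ = 2 * (δ / R) * ((R / δ) ^ p * (δ / R) ^ p) * (K / C₁ * ∫ x in closedBall y ρ, trunc v k x)
          + (2 + 64) * (δ / R) * ∫ x in closedBall y ρ, trunc v k x := by ring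
      _ = _ := by rw [h4]; ring
  have hfr : Real.HolderConjugate (Module.finrank ℝ (Euc n) : ℝ) q := by
    rw [finrank_euclideanSpace_fin]; exact hq
  have hsob := lintegral_pow_le_pow_lintegral_fderiv (volume : Measure (Euc n)) hucd hucs hfr
  have hL : ENNReal.ofReal (∫ x in closedBall y ρ, (trunc v k x ^ 2 * cut y ρ x ^ 2) ^ q)
      ≤ ∫⁻ x, ‖u x‖ₑ ^ q := by
    have hnn : ∀ x, 0 ≤ trunc v k x ^ 2 * cut y ρ x ^ 2 := fun x => by positivity
    rw [ofReal_integral_eq_lintegral_ofReal]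
    · refine le_trans (le_of_eq ?_) (setLIntegral_le_lintegral (closedBall y ρ) _)
      apply lintegral_congr
      intro x
      have : u x = trunc v k x ^ 2 * cut y ρ x ^ 2 := by
        simp [hu, tst]
      rw [this, Real.enorm_eq_ofReal (hnn x), ENNReal.ofReal_rpow_of_nonneg (hnn x) (by linarith)]
    · exact (((ht.pow 2).mul (hcut.pow 2)).rpow_const
        fun _ _ => Or.inr (by linarith)).integrableOn_compact hBc
    · exact Eventually.of_forall fun x => Real.rpow_nonneg (hnn x) _
  have hRR : (S : ℝ≥0∞) * (∫⁻ x, ‖fderiv ℝ u x‖ₑ) ^ q ≤ ENNReal.ofReal ((S : ℝ) *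
      ((2 * (K / C₁ + 1) + 64) * (δ / R) * ∫ x in closedBall y ρ, trunc v k x) ^ q) := by
    rw [ENNReal.ofReal_mul S.coe_nonneg, ENNReal.ofReal_coe_nnreal]
    gcongr
    rw [← ENNReal.ofReal_rpow_of_nonneg (by positivity) (by linarith)]
    gcongr
    rw [← ofReal_integral_norm_eq_lintegral_enorm hfi]
    exact ENNReal.ofReal_le_ofReal hbound
  exact (ENNReal.ofReal_le_ofReal_iff (by positivity)).1 (hL.trans (hsob.trans hRR))

lemma fast_decay {M B q : ℝ} (hM : 0 < M) (hB : 1 < B) (hq : 1 < q) :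
    ∃ θ : ℝ, 0 < θ ∧ ∀ z : ℕ → ℝ, (∀ j, 0 ≤ z j) → (∀ j, z (j + 1) ≤ M * B ^ j * z j ^ q) →
      z 0 ≤ θ → Tendsto z atTop (nhds 0) := by
  have hB0 : 0 < B := by linarith
  have hq1 : 0 < q - 1 := by linarith
  set r := B ^ (-(1 / (q - 1))) with hr
  have hr0 : 0 < r := Real.rpow_pos_of_pos hB0 _
  have hr1 : r < 1 := Real.rpow_lt_one_of_one_lt_of_neg hB (by
    have : 0 < 1 / (q - 1) := by positivity
    linarith)
  have hrq : r ^ (q - 1) = B⁻¹ := by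
    rw [hr, ← Real.rpow_mul hB0.le, show -(1 / (q - 1)) * (q - 1) = -1 by field_simp,
      Real.rpow_neg_one]
  set θ := (r / M) ^ (1 / (q - 1)) with hθ
  have hθ0 : 0 < θ := Real.rpow_pos_of_pos (by positivity) _
  have hθq : θ ^ (q - 1) = r / M := by
    rw [hθ, ← Real.rpow_mul (by positivity), show (1 / (q - 1)) * (q - 1) = 1 by field_simp,
      Real.rpow_one]
  refine ⟨θ, hθ0, fun z hz hstep h0 => ?_⟩
  have hind : ∀ j, z j ≤ θ * r ^ j := by
    intro j
    induction j with
    | zero => simpa using h0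
    | succ j ih =>
      have hpos : 0 < θ * r ^ j := by positivity
      have h1 : (θ * r ^ j) ^ q = (θ * r ^ j) * (r / M) * (B⁻¹) ^ j := by
        have e1 : (θ * r ^ j) ^ q = (θ * r ^ j) * (θ * r ^ j) ^ (q - 1) := by
          rw [mul_comm (θ * r ^ j) ((θ * r ^ j) ^ (q - 1)), ← Real.rpow_add_one hpos.ne']
          congr 1; ring
        have e2 : (r ^ j) ^ (q - 1) = (B⁻¹) ^ j := by
          rw [← hrq, ← Real.rpow_natCast, ← Real.rpow_natCast, ← Real.rpow_mul hr0.le,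
            ← Real.rpow_mul hr0.le, mul_comm]
        rw [e1, Real.mul_rpow hθ0.le (by positivity), hθq, e2]; ring
      calc z (j + 1) ≤ M * B ^ j * z j ^ q := hstep j
        _ ≤ M * B ^ j * (θ * r ^ j) ^ q := by
            have := Real.rpow_le_rpow (hz j) ih (by linarith : 0 ≤ q)
            gcongr
        _ = θ * r ^ (j + 1) * (B ^ j * (B⁻¹) ^ j) := by
            rw [h1]; field_simp; ring
        _ = θ * r ^ (j + 1) := by
            rw [← mul_pow, mul_inv_cancel₀ hB0.ne', one_pow, mul_one]
  refine squeeze_zero hz hind ?_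
  have := (tendsto_pow_atTop_nhds_zero_of_lt_one hr0.le hr1).const_mul θ
  simpa using this

lemma trunc_anti {n : ℕ} (v : Euc n → ℝ) {k k' : ℝ} (h : k ≤ k') (x : Euc n) :
    trunc v k' x ≤ trunc v k x := max_le_max (by linarith) le_rfl

lemma cut_lower {n : ℕ} {y : Euc n} {R ρ ρ' s : ℝ} (hR : 0 < R) (hρ' : R / 8 ≤ ρ')
    (hρ : ρ ≤ R / 4) (hs : 0 < s) (hd : ρ - ρ' = R / 8 * s) {x : Euc n}
    (hx : x ∈ closedBall y ρ') : s / 2 ≤ cut y ρ x := by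
  have hxy : ‖x - y‖ ≤ ρ' := by rw [← dist_eq_norm]; exact hx
  have hRs : 0 < R * s := by positivity
  have hρ0 : 0 < ρ := by nlinarith
  refine le_trans ?_ (le_max_left _ _)
  have h1 : ‖x - y‖ ^ 2 / ρ ^ 2 ≤ ρ' ^ 2 / ρ ^ 2 := by gcongr
  have h2 : ρ' ^ 2 / ρ ^ 2 ≤ 1 - s / 2 := by
    rw [div_le_iff₀ (by positivity)]
    have h3 : ρ' ≤ ρ := by nlinarith
    have h4 : ρ' ^ 2 ≤ ρ' * ρ := by nlinarith
    have h5 : ρ * s ≤ R / 4 * s := by gcongr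
    have h6 : ρ' ≤ ρ - ρ * s / 2 := by linarith
    nlinarith
  linarith

lemma dg_step {n : ℕ} {q : ℝ} (hq : Real.HolderConjugate (n : ℝ) q)
    {p C₁ K δ R h : ℝ} (hp : 1 < p) (hC₁ : 0 < C₁) (hK : 0 < K) (hδ : 0 < δ) (hR : 0 < R)
    (hh : 0 ≤ h) {U : Set (Euc n)} (hU : IsOpen U)
    {v : Euc n → ℝ} (hv : ContDiffOn ℝ 1 v U) (hE : EnergyEst v U p C₁ K δ R h)
    {k k' d s : ℝ} {y : Euc n} {ρ ρ' : ℝ} (hk : 0 ≤ k) (hρ' : R / 8 ≤ ρ') (hρ : ρ ≤ R / 4)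
    (hs : 0 < s) (hρρ : ρ - ρ' = R / 8 * s) (hd : 0 < d) (hkk : k' = k + d * s)
    (hB : closedBall y ρ ⊆ U)
    (hvB : ∀ x ∈ closedBall y ρ, v x ≤ k + 2 * δ) :
    (∫ x in closedBall y ρ', trunc v k' x) ≤
      (s / 2) ^ (-(2 * q)) * (d * s) ^ (1 - 2 * q) *
      ((lintegralPowLePowLIntegralFDerivConst (volume : Measure (Euc n)) q : ℝ) *
        ((2 * (K / C₁ + 1) + 64) * (δ / R) * ∫ x in closedBall y ρ, trunc v k x) ^ q) := by
  have hq1 : 1 < q := hq.symm.lt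
  have hRs : 0 < R * s := by positivity
  have hle : ρ' ≤ ρ := by nlinarith
  have hsub : closedBall y ρ' ⊆ closedBall y ρ := closedBall_subset_closedBall hle
  have hsob := sobolev_step hq hp hC₁ hK hδ hR hh hU hv hE hk (hρ'.trans hle) hB hvB
  have hvc : ContinuousOn v U := hv.continuousOn
  have ht : ContinuousOn (trunc v k) (closedBall y ρ) := trunc_continuousOn (hvc.mono hB) k
  have ht' : ContinuousOn (trunc v k') (closedBall y ρ') :=
    trunc_continuousOn (hvc.mono (hsub.trans hB)) k'
  have hcut : ContinuousOn (cut y ρ) (closedBall y ρ) := (cut_continuous y ρ).continuousOn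
  have j : IntegrableOn (fun x => (trunc v k x ^ 2 * cut y ρ x ^ 2) ^ q) (closedBall y ρ) :=
    (((ht.pow 2).mul (hcut.pow 2)).rpow_const
        fun _ _ => Or.inr (by linarith)).integrableOn_compact (isCompact_closedBall y ρ)
  have hnn : ∀ x, 0 ≤ (trunc v k x ^ 2 * cut y ρ x ^ 2) ^ q := fun x => by positivity
  set c := (s / 2) ^ (-(2 * q)) * (d * s) ^ (1 - 2 * q) with hc
  have hc0 : 0 < c := by positivity
  calc (∫ x in closedBall y ρ', trunc v k' x)
      ≤ ∫ x in closedBall y ρ', c * (trunc v k x ^ 2 * cut y ρ x ^ 2) ^ q := by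
        refine setIntegral_mono_on (ht'.integrableOn_compact (isCompact_closedBall y ρ'))
          ((j.mono_set hsub).const_mul c) measurableSet_closedBall ?_
        intro x hx
        have he := cut_lower hR hρ' hρ hs hρρ hx
        by_cases hpos : v x ≤ k'
        · have : trunc v k' x = 0 := max_eq_right (by linarith)
          rw [this]
          exact mul_nonneg hc0.le (hnn x)
        · push Not at hpos
          have hds : 0 < d * s := by positivity
          set w := trunc v k x with hw
          have hwd : d * s ≤ w := le_trans (by linarith) (le_max_left (v x - k) 0)
          have hw0 : 0 < w := by linarith
          refine (trunc_anti v (by linarith : k ≤ k') x).trans ?_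
          rw [← hw]
          have e1 : (s / 2) ^ (2 * q) ≤ (cut y ρ x ^ 2) ^ q := by
            rw [← Real.rpow_natCast, ← Real.rpow_mul (cut_nonneg _ _ _)]
            exact Real.rpow_le_rpow (by positivity) he (by positivity)
          have e2 : w ^ (1 - 2 * q) ≤ (d * s) ^ (1 - 2 * q) :=
            Real.rpow_le_rpow_of_nonpos hds hwd (by linarith)
          have e3 : (w ^ 2) ^ q = w ^ (2 * q) := by
            rw [← Real.rpow_natCast, ← Real.rpow_mul hw0.le]; norm_num
          have e4 : w = w ^ (1 - 2 * q) * w ^ (2 * q) := by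
            rw [← Real.rpow_add hw0]; norm_num
          have e5 : (s / 2) ^ (-(2 * q)) * (s / 2) ^ (2 * q) = 1 := by
            rw [← Real.rpow_add (by positivity)]; norm_num
          rw [Real.mul_rpow (by positivity) (by positivity), e3]
          calc w = w ^ (1 - 2 * q) * w ^ (2 * q) := e4
            _ ≤ (d * s) ^ (1 - 2 * q) * w ^ (2 * q) := by gcongr
            _ = (d * s) ^ (1 - 2 * q) * w ^ (2 * q) *
                ((s / 2) ^ (-(2 * q)) * (s / 2) ^ (2 * q)) := by rw [e5, mul_one]
            _ ≤ (d * s) ^ (1 - 2 * q) * w ^ (2 * q) *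
                ((s / 2) ^ (-(2 * q)) * (cut y ρ x ^ 2) ^ q) := by gcongr
            _ = _ := by rw [hc]; ring
    _ = c * ∫ x in closedBall y ρ', (trunc v k x ^ 2 * cut y ρ x ^ 2) ^ q := integral_const_mul _ _
    _ ≤ c * ∫ x in closedBall y ρ, (trunc v k x ^ 2 * cut y ρ x ^ 2) ^ q := by
        exact mul_le_mul_of_nonneg_left
          (setIntegral_mono_set j (Eventually.of_forall hnn) hsub.eventuallyLE) hc0.le
    _ ≤ _ := by gcongr

lemma dg_alg {n : ℕ} {q : ℝ} (hq : Real.HolderConjugate (n : ℝ) q) {c δ R S K2 z : ℝ}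
    (hc : 0 < c) (hδ : 0 < δ) (hR : 0 < R) (hS : 0 ≤ S) (hK : 0 < K2) (hz : 0 ≤ z) (j : ℕ) :
    ((1 / 2 : ℝ) ^ (j + 1) / 2) ^ (-(2 * q)) * (c * δ * (1 / 2 : ℝ) ^ (j + 1)) ^ (1 - 2 * q) *
      (S * (K2 * (δ / R) * (δ * R ^ n * z)) ^ q) ≤
    δ * R ^ n * ((2 : ℝ) ^ (2 * q) * (2 : ℝ) ^ (4 * q - 1) * c ^ (1 - 2 * q) * (S + 1) * K2 ^ q *
      ((2 : ℝ) ^ (4 * q - 1)) ^ j * z ^ q) := by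
  have hnq : ((n : ℝ) - 1) * q = n := by
    have h1 := hq.sub_one_mul_conj
    linarith
  have hhalf : (1 / 2 : ℝ) ^ (j + 1) = (2 : ℝ) ^ (-((j : ℝ) + 1)) := by
    rw [Real.rpow_neg (by norm_num), one_div, inv_pow]
    congr 1
    rw [← Real.rpow_natCast]; push_cast; rfl
  have e1 : ((1 / 2 : ℝ) ^ (j + 1) / 2) ^ (-(2 * q)) = (2 : ℝ) ^ ((j + 2) * (2 * q)) := by
    rw [hhalf, show (2 : ℝ) ^ (-((j : ℝ) + 1)) / 2 = (2 : ℝ) ^ (-((j : ℝ) + 2)) by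
      rw [show -((j : ℝ) + 2) = -((j : ℝ) + 1) - 1 by ring, Real.rpow_sub_one (by norm_num)],
      ← Real.rpow_mul (by norm_num)]
    congr 1; ring
  have e2 : (c * δ * (1 / 2 : ℝ) ^ (j + 1)) ^ (1 - 2 * q) =
      c ^ (1 - 2 * q) * δ ^ (1 - 2 * q) * (2 : ℝ) ^ ((j + 1) * (2 * q - 1)) := by
    rw [hhalf, Real.mul_rpow (by positivity) (by positivity), Real.mul_rpow hc.le hδ.le,
      ← Real.rpow_mul (by norm_num)]
    congr 2; ring
  have e3 : (2 : ℝ) ^ ((j + 2) * (2 * q)) * (2 : ℝ) ^ ((j + 1) * (2 * q - 1)) =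
      (2 : ℝ) ^ (2 * q) * (2 : ℝ) ^ (4 * q - 1) * ((2 : ℝ) ^ (4 * q - 1)) ^ j := by
    rw [← Real.rpow_natCast ((2 : ℝ) ^ (4 * q - 1)) j, ← Real.rpow_mul (by norm_num),
      ← Real.rpow_add (by norm_num), ← Real.rpow_add (by norm_num), ← Real.rpow_add (by norm_num)]
    congr 1; ring
  have e4 : K2 * (δ / R) * (δ * R ^ n * z) = K2 * (δ ^ (2:ℝ) * (R ^ ((n : ℝ) - 1) * z)) := by
    rw [Real.rpow_sub_one hR.ne', Real.rpow_natCast, Real.rpow_two]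
    field_simp
  have e5 : (K2 * (δ / R) * (δ * R ^ n * z)) ^ q = K2 ^ q * (δ ^ (2 * q) * (R ^ n * z ^ q)) := by
    rw [e4, Real.mul_rpow hK.le (by positivity), Real.mul_rpow (by positivity) (by positivity),
      Real.mul_rpow (by positivity) hz, ← Real.rpow_mul hδ.le, ← Real.rpow_mul hR.le, hnq,
      Real.rpow_natCast]
  have e6 : δ ^ (1 - 2 * q) * δ ^ (2 * q) = δ := by
    rw [← Real.rpow_add hδ]; norm_num
  rw [e1, e2, e5]
  calc _ = ((2 : ℝ) ^ ((j + 2) * (2 * q)) * (2 : ℝ) ^ ((j + 1) * (2 * q - 1))) *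
        c ^ (1 - 2 * q) * (δ ^ (1 - 2 * q) * δ ^ (2 * q)) * S * K2 ^ q * (R ^ n * z ^ q) := by ring
    _ = δ * R ^ n * ((2 : ℝ) ^ (2 * q) * (2 : ℝ) ^ (4 * q - 1) * c ^ (1 - 2 * q) * S * K2 ^ q *
      ((2 : ℝ) ^ (4 * q - 1)) ^ j * z ^ q) := by rw [e3, e6]; ring
    _ ≤ _ := by
      have : S ≤ S + 1 := by linarith
      gcongr

lemma degiorgi {n : ℕ} {q : ℝ} (hq : Real.HolderConjugate (n : ℝ) q)
    {p C₁ K c : ℝ} (hp : 1 < p) (hC₁ : 0 < C₁) (hK : 0 < K) (hc : 0 < c) :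
    ∃ θ : ℝ, 0 < θ ∧ ∀ (δ R h : ℝ) (_ : 0 < δ) (_ : 0 < R) (_ : 0 ≤ h) (U : Set (Euc n))
      (_ : IsOpen U) (v : Euc n → ℝ) (_ : ContDiffOn ℝ 1 v U) (_ : EnergyEst v U p C₁ K δ R h)
      (k : ℝ) (y : Euc n) (_ : 0 ≤ k) (_ : closedBall y (R / 4) ⊆ U)
      (_ : ∀ x ∈ closedBall y (R / 4), v x ≤ k + 2 * δ),
      (∫ x in closedBall y (R / 4), trunc v k x) ≤ θ * (δ * R ^ n) → v y ≤ k + c * δ := by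
  have hq1 : 1 < q := hq.symm.lt
  set S : ℝ := (lintegralPowLePowLIntegralFDerivConst (volume : Measure (Euc n)) q : ℝ) with hS
  have hS0 : 0 ≤ S := NNReal.coe_nonneg _
  set K2 := 2 * (K / C₁ + 1) + 64 with hK2
  have hK20 : 0 < K2 := by positivity
  have hB : (1 : ℝ) < (2 : ℝ) ^ (4 * q - 1) := Real.one_lt_rpow (by norm_num) (by linarith)
  obtain ⟨θ, hθ, hdec⟩ := fast_decay
    (M := (2 : ℝ) ^ (2 * q) * (2 : ℝ) ^ (4 * q - 1) * c ^ (1 - 2 * q) * (S + 1) * K2 ^ q)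
    (by positivity) hB hq1
  refine ⟨θ, hθ, ?_⟩
  intro δ R h hδ hR hh U hU v hv hE k y hk hBU hvB hY
  set κ : ℕ → ℝ := fun j => k + c * δ * (1 - (1 / 2 : ℝ) ^ j) with hκ
  set ρ : ℕ → ℝ := fun j => R / 8 * (1 + (1 / 2 : ℝ) ^ j) with hρ
  have hj0 : ∀ j : ℕ, 0 < (1 / 2 : ℝ) ^ j := fun j => by positivity
  have hj1 : ∀ j : ℕ, (1 / 2 : ℝ) ^ j ≤ 1 := fun j => pow_le_one₀ (by norm_num) (by norm_num)
  have hκk : ∀ j, k ≤ κ j := fun j => by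
    have : 0 ≤ c * δ * (1 - (1 / 2 : ℝ) ^ j) :=
      mul_nonneg (by positivity) (by linarith [hj1 j])
    simp only [hκ]; linarith
  have hκu : ∀ j, κ j ≤ k + c * δ := fun j => by
    have : 0 < c * δ * (1 / 2 : ℝ) ^ j := by positivity
    simp only [hκ]; linarith
  have hρ8 : ∀ j, R / 8 ≤ ρ j := fun j => by
    have := hj0 j
    simp only [hρ]; nlinarith
  have hρ4 : ∀ j, ρ j ≤ R / 4 := fun j => by
    have := hj1 j
    simp only [hρ]; nlinarith
  have hsub : ∀ j, closedBall y (ρ j) ⊆ closedBall y (R / 4) :=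
    fun j => closedBall_subset_closedBall (hρ4 j)
  set Y : ℕ → ℝ := fun j => ∫ x in closedBall y (ρ j), trunc v (κ j) x with hYd
  have hY0 : ∀ j, 0 ≤ Y j := fun j => integral_nonneg fun x => trunc_nonneg v _ x
  have hD : 0 < δ * R ^ n := by positivity
  have hlim : Tendsto (fun j => Y j / (δ * R ^ n)) atTop (nhds 0) := by
    apply hdec
    · intro j; exact div_nonneg (hY0 j) hD.le
    · intro j
      have hst := dg_step hq hp hC₁ hK hδ hR hh hU hv hE (k := κ j) (k' := κ (j + 1)) (d := c * δ)
        (s := (1 / 2 : ℝ) ^ (j + 1)) (y := y) (ρ := ρ j) (ρ' := ρ (j + 1))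
        (hk.trans (hκk j)) (hρ8 _) (hρ4 _) (hj0 _) (by simp only [hρ, pow_succ]; ring)
        (by positivity) (by simp only [hκ, pow_succ]; ring) ((hsub j).trans hBU)
        (fun x hx => (hvB x (hsub j hx)).trans (by linarith [hκk j]))
      have hz : 0 ≤ Y j / (δ * R ^ n) := div_nonneg (hY0 j) hD.le
      have hal := dg_alg hq hc hδ hR hS0 hK20 hz j
      rw [mul_div_cancel₀ _ hD.ne'] at hal
      rw [div_le_iff₀ hD, mul_comm _ (δ * R ^ n)]
      exact hst.trans hal
    · have e : Y 0 = ∫ x in closedBall y (R / 4), trunc v k x := by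
        simp only [hYd, hκ, hρ, pow_zero]
        rw [show R / 8 * (1 + 1) = R / 4 by ring, show k + c * δ * (1 - 1) = k by ring]
      rw [e, div_le_iff₀ hD]
      exact hY
  have hlimY : Tendsto Y atTop (nhds 0) := by
    have := hlim.mul_const (δ * R ^ n)
    simp only [zero_mul] at this
    refine this.congr fun j => div_mul_cancel₀ _ hD.ne'
  have hvc : ContinuousOn v U := hv.continuousOn
  have hball : closedBall y (R / 8) ⊆ closedBall y (R / 4) :=
    closedBall_subset_closedBall (by linarith)
  have h_integ : ∀ k' r, closedBall y r ⊆ closedBall y (R / 4) →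
      IntegrableOn (trunc v k') (closedBall y r) := fun k' r hr =>
    (trunc_continuousOn (hvc.mono (hr.trans hBU)) k').integrableOn_compact (isCompact_closedBall y r)
  have hle : (∫ x in closedBall y (R / 8), trunc v (k + c * δ) x) ≤ 0 := by
    refine ge_of_tendsto' hlimY fun j => ?_
    calc (∫ x in closedBall y (R / 8), trunc v (k + c * δ) x)
        ≤ ∫ x in closedBall y (R / 8), trunc v (κ j) x :=
          setIntegral_mono_on (h_integ _ _ hball) (h_integ _ _ hball) measurableSet_closedBall
            fun x _ => trunc_anti v (hκu j) x
      _ ≤ Y j := setIntegral_mono_set (h_integ _ _ (hsub j))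
          (Eventually.of_forall fun x => trunc_nonneg v _ x)
          (closedBall_subset_closedBall (hρ8 j)).eventuallyLE
  by_contra hcon
  push Not at hcon
  have hpos : 0 < ∫ x in closedBall y (R / 8), trunc v (k + c * δ) x := by
    rw [setIntegral_pos_iff_support_of_nonneg_ae
      (Eventually.of_forall fun x => trunc_nonneg v _ x) (h_integ _ _ hball)]
    refine Measure.measure_pos_of_mem_nhds volume (x := y) ?_
    have hyU : y ∈ U := hBU (mem_closedBall_self (by positivity))
    have hca : ContinuousAt v y := hvc.continuousAt (hU.mem_nhds hyU)
    filter_upwards [hca.eventually (lt_mem_nhds hcon), closedBall_mem_nhds y (by positivity : 0 < R / 8)]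
      with x hx hx2
    refine ⟨?_, hx2⟩
    have : 0 < trunc v (k + c * δ) x := lt_of_lt_of_le (by linarith) (le_max_left _ _)
    exact this.ne'
  linarith

lemma h_bound {n : ℕ} {p C₁ K δ R h γ k θ : ℝ} (hp : 1 < p) (hC₁ : 0 < C₁) (hK : 0 < K)
    (hδ : 0 < δ) (hR : 0 < R) (hh : 0 ≤ h) (hγ : 0 < γ) {U : Set (Euc n)}
    {v : Euc n → ℝ} (hvc : ContinuousOn v U) (hE : EnergyEst v U p C₁ K δ R h)
    {y : Euc n} (hk : 0 ≤ k) (hB : closedBall y (3 * R / 8) ⊆ U)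
    (hvB : ∀ x ∈ closedBall y (3 * R / 8), v x ≤ k + 2 * δ)
    (hY : θ * (δ * R ^ n) ≤ ∫ x in closedBall y (R / 4), trunc v (k + γ * δ / 2) x) :
    h * ((5 / 9 : ℝ) ^ p * (γ / 2) * θ) * R ^ p ≤
      2 * K * (volume.real (ball (0 : Euc n) 1) + 1) * δ ^ (p - 1) := by
  set ω := volume.real (ball (0 : Euc n) 1) with hω
  have hω0 : 0 ≤ ω := measureReal_nonneg
  have hsub : closedBall y (R / 4) ⊆ closedBall y (3 * R / 8) :=
    closedBall_subset_closedBall (by linarith)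
  have hen := hE k y (3 * R / 8) hk (by linarith) hB hvB
  have h1 : 0 ≤ C₁ * ∫ x in closedBall y (3 * R / 8),
      trunc v k x * (‖gradient v x‖ * cut y (3 * R / 8) x) ^ p := by
    refine mul_nonneg hC₁.le (integral_nonneg fun x => ?_)
    exact mul_nonneg (trunc_nonneg _ _ _)
      (Real.rpow_nonneg (mul_nonneg (norm_nonneg _) (cut_nonneg _ _ _)) _)
  have hnn : ∀ x, 0 ≤ trunc v k x ^ 2 * cut y (3 * R / 8) x ^ p := fun x =>
    mul_nonneg (sq_nonneg _) (Real.rpow_nonneg (cut_nonneg _ _ _) _)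
  have ht : ∀ k', ContinuousOn (trunc v k') (closedBall y (3 * R / 8)) := fun k' =>
    trunc_continuousOn (hvc.mono hB) k'
  have j : IntegrableOn (fun x => trunc v k x ^ 2 * cut y (3 * R / 8) x ^ p)
      (closedBall y (3 * R / 8)) :=
    (((ht k).pow 2).mul ((cut_continuous y (3 * R / 8)).continuousOn.rpow_const
      fun _ _ => Or.inr (by linarith))).integrableOn_compact (isCompact_closedBall _ _)
  have h2 : (5 / 9 : ℝ) ^ p * (γ * δ / 2) *
      (∫ x in closedBall y (R / 4), trunc v (k + γ * δ / 2) x) ≤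
      ∫ x in closedBall y (3 * R / 8), trunc v k x ^ 2 * cut y (3 * R / 8) x ^ p := by
    rw [← integral_const_mul]
    refine le_trans (setIntegral_mono_on ?_ (j.mono_set hsub) measurableSet_closedBall ?_)
      (setIntegral_mono_set j (Eventually.of_forall hnn) hsub.eventuallyLE)
    · exact (((ht _).mono hsub).integrableOn_compact (isCompact_closedBall _ _)).const_mul _
    · intro x hx
      have hcut : 5 / 9 ≤ cut y (3 * R / 8) x := by
        refine le_trans ?_ (le_max_left _ _)
        rw [mem_closedBall, dist_eq_norm] at hx
        have h0 := norm_nonneg (x - y)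
        have : ‖x - y‖ ^ 2 / (3 * R / 8) ^ 2 ≤ 4 / 9 := by
          rw [div_le_iff₀ (by positivity)]
          nlinarith
        linarith
      have hcp : (5 / 9 : ℝ) ^ p ≤ cut y (3 * R / 8) x ^ p :=
        Real.rpow_le_rpow (by norm_num) hcut (by linarith)
      have htt : γ * δ / 2 * trunc v (k + γ * δ / 2) x ≤ trunc v k x ^ 2 := by
        by_cases hx' : v x ≤ k + γ * δ / 2
        · rw [show trunc v (k + γ * δ / 2) x = 0 from max_eq_right (by linarith), mul_zero]
          positivity
        · push Not at hx'
          have hg : 0 < γ * δ / 2 := by positivity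
          rw [show trunc v (k + γ * δ / 2) x = v x - (k + γ * δ / 2) from
            max_eq_left (by linarith), show trunc v k x = v x - k from
            max_eq_left (by linarith)]
          nlinarith
      calc (5 / 9 : ℝ) ^ p * (γ * δ / 2) * trunc v (k + γ * δ / 2) x
          = (γ * δ / 2 * trunc v (k + γ * δ / 2) x) * (5 / 9 : ℝ) ^ p := by ring
        _ ≤ _ := mul_le_mul htt hcp (by positivity) (sq_nonneg _)
  have hvol : volume.real (closedBall y (3 * R / 8)) ≤ R ^ n * (ω + 1) := by
    rw [Measure.addHaar_real_closedBall _ _ (by positivity)]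
    rw [finrank_euclideanSpace_fin]
    have : (3 * R / 8) ^ n ≤ R ^ n := pow_le_pow_left₀ (by positivity) (by linarith) n
    exact mul_le_mul this (by linarith) hω0 (by positivity)
  have h3 : (∫ x in closedBall y (3 * R / 8), trunc v k x) ≤ 2 * δ * (R ^ n * (ω + 1)) := by
    calc (∫ x in closedBall y (3 * R / 8), trunc v k x)
        ≤ ∫ _ in closedBall y (3 * R / 8), 2 * δ := by
          refine setIntegral_mono_on ((ht k).integrableOn_compact (isCompact_closedBall _ _))
            (continuousOn_const.integrableOn_compact (isCompact_closedBall _ _))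
            measurableSet_closedBall fun x hx => ?_
          exact max_le (by linarith [hvB x hx]) (by positivity)
      _ = volume.real (closedBall y (3 * R / 8)) * (2 * δ) := by
          rw [setIntegral_const, smul_eq_mul]
      _ ≤ R ^ n * (ω + 1) * (2 * δ) := by gcongr
      _ = _ := by ring
  have h4 : h * ((5 / 9 : ℝ) ^ p * (γ * δ / 2) * (θ * (δ * R ^ n))) ≤
      K * (δ / R) ^ p * (2 * δ * (R ^ n * (ω + 1))) := by
    calc _ ≤ h * ((5 / 9 : ℝ) ^ p * (γ * δ / 2) *
          (∫ x in closedBall y (R / 4), trunc v (k + γ * δ / 2) x)) := by gcongr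
      _ ≤ h * ∫ x in closedBall y (3 * R / 8), trunc v k x ^ 2 * cut y (3 * R / 8) x ^ p :=
          mul_le_mul_of_nonneg_left h2 hh
      _ ≤ K * (δ / R) ^ p * ∫ x in closedBall y (3 * R / 8), trunc v k x := by linarith
      _ ≤ _ := by
        refine mul_le_mul_of_nonneg_left h3 (by positivity)
  have e : (δ / R) ^ p = δ ^ (p - 1) * δ / R ^ p := by
    rw [Real.div_rpow hδ.le hR.le]
    congr 1
    rw [Real.rpow_sub_one hδ.ne']; field_simp
  rw [e] at h4
  have hRp : 0 < R ^ p := by positivity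
  have hpos : 0 < δ ^ 2 * R ^ n := by positivity
  refine le_of_mul_le_mul_right ?_ hpos
  have h5 := mul_le_mul_of_nonneg_right h4 hRp.le
  calc _ = h * ((5 / 9 : ℝ) ^ p * (γ * δ / 2) * (θ * (δ * R ^ n))) * R ^ p := by ring
    _ ≤ _ := h5
    _ = _ := by field_simp

/-- Lemma 4.8: if `M(·;v)` is nondecreasing on `[r₁, r₂]`,
`M(r₂;v) > M(r₁;v) ≥ γ M(r₂;v)` and the `b`-term is small
(`(M(r₂;v)-M(r₁;v))^{α-p+1}(r₂-r₁)^{p-α} ess sup b ≤ C₁/4`), then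
`(M(r₂;v) - M(r₁;v))^{p-1} ≥ C (r₂ - r₁)^p h`. -/
theorem stmt_17 (n : ℕ) (hn : 2 ≤ n) (p C₁ C₂ α : ℝ) (hp : 1 < p)
    (hC₁ : 0 < C₁) (hC₂ : 0 < C₂) (hα₁ : p - 1 ≤ α) (hα₂ : α ≤ p)
    (γ : ℝ) (hγ0 : 0 < γ) (hγ1 : γ < 1) :
    ∃ C : ℝ, 0 < C ∧
      ∀ (A : Euc n → Euc n → Euc n), StructCond A p C₁ C₂ →
      ∀ (b : Euc n → ℝ), Measurable b → (∀ x, 0 ≤ b x) → LocBdd b →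
      ∀ (r₁ r₂ h : ℝ), 0 < r₁ → r₁ < r₂ → 0 ≤ h →
      ∀ v : Euc n → ℝ,
        ContinuousOn v {x : Euc n | r₁ ≤ ‖x‖ ∧ ‖x‖ ≤ r₂} →
        (∀ x, r₁ ≤ ‖x‖ → ‖x‖ ≤ r₂ → 0 ≤ v x) →
        ContDiffOn ℝ 1 v (Ann n r₁ r₂) →
        IsWeakSol A b α
          (Set.indicator {x ∈ Ann n r₁ r₂ | 0 < v x} fun _ => h) (Ann n r₁ r₂) v →
        (∀ ρ₁ ρ₂ : ℝ, r₁ ≤ ρ₁ → ρ₁ ≤ ρ₂ → ρ₂ ≤ r₂ → sphMax v ρ₁ ≤ sphMax v ρ₂) →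
        sphMax v r₁ < sphMax v r₂ → γ * sphMax v r₂ ≤ sphMax v r₁ →
        (sphMax v r₂ - sphMax v r₁) ^ (α - p + 1) * (r₂ - r₁) ^ (p - α) *
            essSup b (volume.restrict (Ann n r₁ r₂)) ≤ C₁ / 4 →
        C * (r₂ - r₁) ^ p * h ≤ (sphMax v r₂ - sphMax v r₁) ^ (p - 1) := by
  have hn1 : (1 : ℝ) < n := by exact_mod_cast (by omega : 1 < n)
  have hq : Real.HolderConjugate (n : ℝ) (Real.conjExponent (n : ℝ)) :=
    Real.HolderConjugate.conjExponent hn1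
  set K := (C₁ / 2) ^ (1 - p) * (16 * p * C₂ + C₁ / 4) ^ p * 2 ^ p with hKdef
  have hK : 0 < K := by positivity
  obtain ⟨θ, hθ, hDG⟩ := degiorgi hq hp hC₁ hK (c := γ / 4) (by positivity)
  set ω := volume.real (ball (0 : Euc n) 1) with hω
  have hω0 : 0 ≤ ω := measureReal_nonneg
  refine ⟨((5 / 9 : ℝ) ^ p * (γ / 2) * θ) / (2 * K * (ω + 1)), by positivity, ?_⟩
  intro A hA b hbm hb0 hbl r₁ r₂ h hr₁ hr₁₂ hh v hvcl hv0 hv hw hmono hlt hγM hβ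
  haveI : Nontrivial (Euc n) := by
    haveI : Nonempty (Fin n) := ⟨⟨0, by omega⟩⟩
    infer_instance
  set M1 := sphMax v r₁ with hM1
  set M2 := sphMax v r₂ with hM2
  set δ := M2 - M1 with hδd
  set R := r₂ - r₁ with hRd
  have hδ : 0 < δ := sub_pos.2 hlt
  have hR : 0 < R := sub_pos.2 hr₁₂
  have hcs : ∀ r, r₁ ≤ r → r ≤ r₂ → IsCompact (v '' sphere (0 : Euc n) r) := by
    intro r h1 h2
    refine (isCompact_sphere _ _).image_of_continuousOn (hvcl.mono ?_)
    intro x hx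
    rw [mem_sphere_zero_iff_norm] at hx
    exact ⟨by rw [hx]; exact h1, by rw [hx]; exact h2⟩
  have hne : ∀ r, r₁ ≤ r → (v '' sphere (0 : Euc n) r).Nonempty := fun r h1 =>
    (NormedSpace.sphere_nonempty.2 (by linarith)).image v
  have hvM : ∀ x, r₁ ≤ ‖x‖ → ‖x‖ ≤ r₂ → v x ≤ M2 := by
    intro x h1 h2
    refine le_trans ?_ (hmono ‖x‖ r₂ h1 h2 le_rfl)
    exact le_csSup (hcs _ h1 h2).bddAbove ⟨x, by simp, rfl⟩
  have hM10 : 0 ≤ M1 := by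
    obtain ⟨x, hx, hxe⟩ := (hcs r₁ le_rfl hr₁₂.le).sSup_mem (hne r₁ le_rfl)
    rw [mem_sphere_zero_iff_norm] at hx
    rw [hM1]; unfold sphMax; rw [← hxe]
    exact hv0 x hx.ge (by rw [hx]; exact hr₁₂.le)
  have hMγ : γ * δ ≤ M1 := by
    refine le_trans ?_ hγM
    exact mul_le_mul_of_nonneg_left (by linarith) hγ0.le
  have hmid1 : r₁ ≤ (r₁ + r₂) / 2 := by linarith
  have hmid2 : (r₁ + r₂) / 2 ≤ r₂ := by linarith
  obtain ⟨y, hy, hye⟩ := (hcs _ hmid1 hmid2).sSup_mem (hne _ hmid1)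
  rw [mem_sphere_zero_iff_norm] at hy
  have hvy : M1 ≤ v y := by rw [hye]; exact hmono _ _ le_rfl hmid1 hmid2
  have hU : IsOpen (Ann n r₁ r₂) :=
    (isOpen_lt continuous_const continuous_norm).inter (isOpen_lt continuous_norm continuous_const)
  have hbβ : ∀ᵐ x ∂(volume.restrict (Ann n r₁ r₂)),
      b x ≤ essSup b (volume.restrict (Ann n r₁ r₂)) := by
    obtain ⟨Cb, hCb⟩ := hbl (closedBall 0 r₂) (isCompact_closedBall _ _)
    refine ae_le_essSup ⟨Cb, ?_⟩
    rw [eventually_map]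
    filter_upwards [ae_restrict_mem hU.measurableSet] with x hx
    exact hCb x (mem_closedBall_zero_iff.2 hx.2.le)
  have hE := energy_est hp hC₁ hC₂ hα₁ hα₂ hA hbm hb0 hbl hU hv hh hw hδ hR hbβ hβ
  have hBU : closedBall y (3 * R / 8) ⊆ Ann n r₁ r₂ := by
    intro x hx
    rw [mem_closedBall, dist_eq_norm] at hx
    have := abs_le.1 ((abs_norm_sub_norm_le x y).trans hx)
    exact ⟨by linarith [this.1], by linarith [this.2]⟩
  have hsub : closedBall y (R / 4) ⊆ closedBall y (3 * R / 8) :=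
    closedBall_subset_closedBall (by linarith)
  have hγδ : γ * δ < δ := by nlinarith
  have hγδ0 : 0 < γ * δ := by positivity
  have hvk : ∀ x ∈ closedBall y (3 * R / 8), v x ≤ (M1 - γ * δ) + 2 * δ := fun x hx => by
    have := hvM x (hBU hx).1.le (hBU hx).2.le
    linarith
  have hY : θ * (δ * R ^ n) ≤
      ∫ x in closedBall y (R / 4), trunc v ((M1 - γ * δ) + γ * δ / 2) x := by
    by_contra hcon
    push Not at hcon
    have := hDG δ R h hδ hR hh (Ann n r₁ r₂) hU v hv hE ((M1 - γ * δ) + γ * δ / 2) y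
      (by linarith) (hsub.trans hBU) (fun x hx => (hvk x (hsub hx)).trans (by linarith)) hcon.le
    linarith
  have hfin := h_bound hp hC₁ hK hδ hR hh hγ0 hv.continuousOn hE (y := y) (k := M1 - γ * δ)
    (by linarith) hBU hvk hY
  have hden : 0 < 2 * K * (ω + 1) := by positivity
  rw [div_mul_eq_mul_div, div_mul_eq_mul_div, div_le_iff₀ hden]
  calc _ = h * ((5 / 9 : ℝ) ^ p * (γ / 2) * θ) * R ^ p := by ring
    _ ≤ _ := hfin
    _ = _ := by ring
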